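/- arXiv:math/0209126 — 6 statements merged into one kernel-verified Lean document; each statement's English description precedes it below -/
import Mathlib

section
/- The Frobenius homomorphism maps F_n^{(k,2)} into F_n^{(k,r)}: if f ∈ ℂ[x_1,…,x_n] is a symmetric polynomial satisfying f(x, tx, t²x, …, t^k x, x_{k+2}, …, x_n) = 0 identically, then the symmetric polynomial f(x_1^{r−1}, …, x_n^{r−1}) vanishes identically on every plane x_i = t^{i−1} q^{s_i} x_1 (2 ≤ i ≤ k+1) with s_2,…,s_{k+1} ∈ {0,1,…,r−2}. -/
open MvPolynomial

/-!
Raising the coordinates of a point of the plane `x_j = t ^ j * q ^ s_j * x_0` to the power `r - 1`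
kills the factors `q ^ s_j` and leaves `x_0 ^ (r - 1)` times the powers `t ^ ((r - 1) * j)`. As
`r - 1` is coprime to `k + 1`, multiplication by `r - 1` permutes the residues modulo `k + 1`, so
these are the numbers `1, t, …, t ^ k` in another order, and the symmetric polynomial `f` does not
see the order.
-/

section Symmetric

variable {σ R : Type*} [CommSemiring R] {f : MvPolynomial σ R}

theorem isSymmetric_expand (hf : f.IsSymmetric) (m : ℕ) : (expand m f).IsSymmetric :=
  fun e => by rw [rename_expand, hf e]

theorem eval_comp_perm_of_isSymmetric (hf : f.IsSymmetric) (e : Equiv.Perm σ) (w : σ → R) :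
    eval (w ∘ e) f = eval w f := by
  rw [← eval_rename, hf e]

theorem eval_expand_eq_of_pow_eq_comp_perm (hf : f.IsSymmetric) {m : ℕ} {z w : σ → R}
    (e : Equiv.Perm σ) (h : z ^ m = w ∘ e) : eval z (expand m f) = eval w f := by
  rw [eval_expand, h, eval_comp_perm_of_isSymmetric hf]

end Symmetric

theorem exists_perm_forall_val_eq_mul_mod {n d m : ℕ} (hdm : d.Coprime m) (hdn : d ≤ n) :
    ∃ e : Equiv.Perm (Fin n),
      (∀ j : Fin n, (j : ℕ) < d → (e j : ℕ) = m * j % d) ∧ ∀ j : Fin n, d ≤ (j : ℕ) → e j = j := by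
  let mulMod (j : Fin d) : Fin d := ⟨m * j % d, Nat.mod_lt _ j.pos⟩
  have mulMod_injective : Function.Injective mulMod := fun a b hab =>
    have hmod : (a : ℕ) ≡ b [MOD d] :=
      Nat.ModEq.cancel_left_of_coprime hdm (congrArg Fin.val hab)
    Fin.ext (hmod.eq_of_lt_of_lt a.isLt b.isLt)
  let mulModPerm : Equiv.Perm (Fin d) := .ofBijective mulMod mulMod_injective.bijective_of_finite
  refine ⟨mulModPerm.viaFintypeEmbedding (Fin.castLEEmb hdn), fun j hj => ?_, fun j hj => ?_⟩
  · exact congrArg Fin.val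
      (mulModPerm.viaFintypeEmbedding_apply_image (Fin.castLEEmb hdn) ⟨j, hj⟩)
  · refine mulModPerm.viaFintypeEmbedding_apply_notMem_range _ ?_
    rintro ⟨i, rfl⟩
    exact hj.not_gt i.isLt

theorem frobenius_maps_Fk2_into_Fkr_general {R : Type*} [CommSemiring R] {k m n : ℕ}
    (hcop : Nat.Coprime (k + 1) m) (hn : k + 1 ≤ n) {t : R} (ht : t ^ (k + 1) = 1)
    {f : MvPolynomial (Fin n) R} (hsym : f.IsSymmetric)
    (hf : ∀ (x : R) (y : Fin n → R),
      eval (fun j : Fin n => if (j : ℕ) ≤ k then t ^ (j : ℕ) * x else y j) f = 0) :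
    (expand m f).IsSymmetric ∧
    ∀ ζ : Fin n → R, (∀ i, ζ i ^ m = 1) → ∀ (x : R) (y : Fin n → R),
      eval (fun j : Fin n => if (j : ℕ) = 0 then x
        else if (j : ℕ) ≤ k then t ^ (j : ℕ) * ζ j * x else y j) (expand m f) = 0 := by
  refine ⟨isSymmetric_expand hsym m, fun ζ hζ x y => ?_⟩
  obtain ⟨e, he_mul, he_fix⟩ := exists_perm_forall_val_eq_mul_mod hcop hn
  rw [eval_expand_eq_of_pow_eq_comp_perm hsym e (funext fun j => ?_)]
  · exact hf (x ^ m) (y ^ m)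
  simp only [Pi.pow_apply, Function.comp_apply]
  by_cases hj : (j : ℕ) ≤ k
  · have hej : (e j : ℕ) = m * j % (k + 1) := he_mul j (Nat.lt_succ_of_le hj)
    have hej_le : (e j : ℕ) ≤ k := hej ▸ Nat.le_of_lt_succ (Nat.mod_lt _ k.succ_pos)
    have ht_pow : t ^ (e j : ℕ) = (t ^ (j : ℕ)) ^ m := by
      rw [hej, ← pow_eq_pow_mod _ ht, mul_comm, pow_mul]
    rw [if_pos hj, if_pos hej_le, ht_pow]
    split_ifs with hj0
    · rw [hj0, pow_zero, one_pow, one_mul]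
    · rw [mul_pow, mul_pow, hζ, mul_one]
  · have hj0 : (j : ℕ) ≠ 0 := by omega
    rw [he_fix j (Nat.lt_of_not_le hj), if_neg hj0, if_neg hj, if_neg hj]

/-- The Frobenius homomorphism maps `F_n^{(k,2)}` into `F_n^{(k,r)}`:
if `f` is a symmetric polynomial with `f(x, tx, …, t^k x, x_{k+2}, …, x_n) = 0` identically,
then `f(x_1^{r-1}, …, x_n^{r-1})` is symmetric and vanishes identically on every plane
`x_i = t^{i-1} q^{s_i} x_1` (`2 ≤ i ≤ k+1`), `s_i ∈ {0,…,r-2}` (0-indexed below). -/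
theorem frobenius_maps_Fk2_into_Fkr
    (k r n : ℕ) (hk : 0 < k) (hr : 2 ≤ r) (hcop : Nat.Coprime (k + 1) (r - 1))
    (t q : ℂ) (ht : IsPrimitiveRoot t (k + 1)) (hq : IsPrimitiveRoot q (r - 1))
    (hn : k + 1 ≤ n)
    (f : MvPolynomial (Fin n) ℂ) (hsym : f.IsSymmetric)
    (hf : ∀ (x : ℂ) (y : Fin n → ℂ),
      MvPolynomial.eval
        (fun j : Fin n => if (j : ℕ) ≤ k then t ^ (j : ℕ) * x else y j) f = 0) :
    (((MvPolynomial.aeval fun i : Fin n =>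
        (MvPolynomial.X i : MvPolynomial (Fin n) ℂ) ^ (r - 1)) f).IsSymmetric) ∧
    ∀ (s : ℕ → ℕ), (∀ i, s i ≤ r - 2) → ∀ (x : ℂ) (y : Fin n → ℂ),
      MvPolynomial.eval
        (fun j : Fin n => if (j : ℕ) = 0 then x
          else if (j : ℕ) ≤ k then t ^ (j : ℕ) * q ^ (s (j : ℕ)) * x else y j)
        ((MvPolynomial.aeval fun i : Fin n =>
          (MvPolynomial.X i : MvPolynomial (Fin n) ℂ) ^ (r - 1)) f) = 0 := by
  exact (frobenius_maps_Fk2_into_Fkr_general hcop hn ht.pow_eq_one hsym hf).imp_right fun h s _ =>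
    h (fun i => q ^ s i) fun i => by rw [pow_right_comm, hq.pow_eq_one, one_pow]
end

section
/- The set of Hall–Littlewood polynomials {P_λ(x_1,…,x_n;t)}, where λ ranges over all admissible partitions in π_n, is a basis of the ℂ-vector space F_n^{(k,2)}. (In particular, for admissible λ the defining formula for P_λ(x_1,…,x_n;t) has no pole at the primitive (k+1)-th root of unity t, and each P_λ lies in F_n^{(k,2)}.) -/
open MvPolynomial

/-- The Vandermonde-type product `∏_{1 ≤ i < j ≤ n} (x_i - c·x_j)`. -/
noncomputable def prodLT (n : ℕ) (c : ℂ) : MvPolynomial (Fin n) ℂ :=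
  ∏ p ∈ Finset.univ.filter (fun p : Fin n × Fin n => p.1 < p.2),
    (MvPolynomial.X p.1 - MvPolynomial.C c * MvPolynomial.X p.2)

/-- The scalar prefactor `∏_{i ≥ 0} ∏_{j=1}^{m_i} (1-t)/(1-t^j)` of the Hall–Littlewood
polynomial, where `m_i = #{a : λ_a = i}` (the product over `i` is effectively finite). -/
noncomputable def hlCoeff (n : ℕ) (t : ℂ) (l : Fin n → ℕ) : ℂ :=
  ∏ i ∈ Finset.range (∑ a, l a + 1),
    ∏ j ∈ Finset.range ((Finset.univ.filter fun a : Fin n => l a = i).card),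
      (1 - t) / (1 - t ^ (j + 1))

/-- `P` is the Hall–Littlewood polynomial `P_λ(x_1,…,x_n;t)`, characterized by the
denominator-cleared form of the defining formula
`P_λ = (∏_i ∏_{j=1}^{m_i} (1-t)/(1-t^j)) Σ_{w ∈ S_n} w(x^λ ∏_{i<j} (x_i - t x_j)/(x_i - x_j))`:
multiplying by the Vandermonde determinant `∏_{i<j}(x_i - x_j)` and using
`w(∏_{i<j}(x_i - x_j)) = sign(w)·∏_{i<j}(x_i - x_j)`. -/
def IsHallLittlewood (n : ℕ) (t : ℂ) (l : Fin n → ℕ) (P : MvPolynomial (Fin n) ℂ) : Prop :=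
  prodLT n 1 * P =
    MvPolynomial.C (hlCoeff n t l) *
      ∑ w : Equiv.Perm (Fin n), (Equiv.Perm.sign w : ℤ) •
        MvPolynomial.rename w ((∏ a, MvPolynomial.X a ^ l a) * prodLT n t)

/-!
Under the lexicographic order `P_λ` has leading exponent `λ`. Indeed the summands of
`∑ w, sign w • w (x^λ ∏_{i<j} (x_i - t x_j))` have leading exponents `w λ + ρ` with `ρ` the leading
exponent of the Vandermonde product, and the coefficient of `x^{λ+ρ}` in the sum is
`∑_{w λ = λ} t^{inv w}`, a product of `t`-factorials which the prefactor of `P_λ` cancels.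

In each summand of `P_λ` one of the factors `x_i - t x_j` vanishes on the cyclic progression
`x, tx, …, t^k x`, so `P_λ` lies in `F = F_n^{(k,2)}`. Conversely, let `f ∈ F` be nonzero with
leading exponent `d`. If `d` took some value on a set `S` of `k + 1` indices, then among the
exponents of `f` only `d` would contribute to the monomial that `x^d` becomes when the variables
indexed by `S` are made proportional, so that this specialization of `f` would not vanish. Hence
the leading exponents of `F` are exactly the admissible partitions, and subtracting multiples of
the `P_λ` reduces every `f ∈ F` to zero.
-/

namespace HallLittlewood

open Finset Equiv MonomialOrder

section LeadingExponents

variable {σ ι K : Type*} [Field K] {m : MonomialOrder σ} {P : ι → MvPolynomial σ K}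

theorem linearIndependent_of_injective_degree (hP : ∀ i, P i ≠ 0)
    (hdeg : Function.Injective fun i ↦ m.degree (P i)) : LinearIndependent K P := by
  classical
  rw [linearIndependent_iff']
  by_contra! ⟨s, g, hsum, i₀, hi₀, hgi₀⟩
  obtain ⟨i, hi, hmax⟩ := exists_max_image {i ∈ s | g i ≠ 0} (fun i ↦ m.toSyn (m.degree (P i)))
    ⟨i₀, mem_filter.2 ⟨hi₀, hgi₀⟩⟩
  obtain ⟨his, hgi⟩ := mem_filter.1 hi
  have hother : ∀ j ∈ s, j ≠ i → coeff (m.degree (P i)) (g j • P j) = 0 := fun j hj hji ↦ by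
    obtain hgj | hgj := eq_or_ne (g j) 0
    · simp [hgj]
    · have hlt : m.degree (P j) ≺[m] m.degree (P i) :=
        (hmax j (mem_filter.2 ⟨hj, hgj⟩)).lt_of_ne fun h ↦ hji (hdeg (m.toSyn.injective h))
      rw [coeff_smul, coeff_eq_zero_of_lt hlt, smul_zero]
  have hcoeff := congrArg (coeff (m.degree (P i))) hsum
  rw [coeff_sum, sum_eq_single_of_mem i his hother, coeff_smul, coeff_zero] at hcoeff
  exact smul_ne_zero hgi (coeff_degree_ne_zero_iff.2 (hP i)) hcoeff

theorem degree_sub_smul_lt {f p : MvPolynomial σ K} (hp : p ≠ 0) (hdeg : m.degree p = m.degree f)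
    (hne : f - (m.leadingCoeff f / m.leadingCoeff p) • p ≠ 0) :
    m.degree (f - (m.leadingCoeff f / m.leadingCoeff p) • p) ≺[m] m.degree f := by
  refine lt_of_le_of_ne (degree_sub_le.trans (sup_le le_rfl ?_)) fun h ↦ ?_
  · exact hdeg ▸ degree_smul_le
  · refine (coeff_degree_ne_zero_iff (m := m)).2 hne ?_
    rw [m.toSyn.injective h, coeff_sub, coeff_smul, smul_eq_mul, ← hdeg]
    change coeff (m.degree p) f - m.leadingCoeff f / m.leadingCoeff p * m.leadingCoeff p = 0
    rw [div_mul_cancel₀ _ (leadingCoeff_ne_zero_iff.2 hp), hdeg]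
    exact sub_self _

theorem le_span_range_of_forall_exists_degree_eq {V : Submodule K (MvPolynomial σ K)}
    (hV : ∀ i, P i ∈ V) (hP : ∀ i, P i ≠ 0)
    (hdeg : ∀ f ∈ V, f ≠ 0 → ∃ i, m.degree (P i) = m.degree f) :
    V ≤ Submodule.span K (Set.range P) := by
  suffices h : ∀ (d : m.syn), ∀ f ∈ V, m.toSyn (m.degree f) = d →
      f ∈ Submodule.span K (Set.range P) from fun f hf ↦ h _ f hf rfl
  intro d
  induction d using WellFoundedLT.induction with
  | ind d ih =>
    rintro f hf rfl
    obtain rfl | hf0 := eq_or_ne f 0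
    · exact Submodule.zero_mem _
    obtain ⟨i, hi⟩ := hdeg f hf hf0
    set c := m.leadingCoeff f / m.leadingCoeff (P i)
    have hPi : c • P i ∈ Submodule.span K (Set.range P) :=
      Submodule.smul_mem _ _ (Submodule.subset_span ⟨i, rfl⟩)
    rw [← Submodule.sub_mem_iff_left _ hPi]
    obtain h0 | hne := eq_or_ne (f - c • P i) 0
    · exact h0 ▸ Submodule.zero_mem _
    · exact ih _ (degree_sub_smul_lt (hP i) hi hne) _
        (Submodule.sub_mem _ hf (Submodule.smul_mem _ _ (hV i))) rfl

end LeadingExponents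

section Symmetric

variable {σ R : Type*} [CommRing R]

theorem mapDomain_perm_mem_support {f : MvPolynomial σ R} (hf : f.IsSymmetric) {v : σ →₀ ℕ}
    (hv : v ∈ f.support) (w : Perm σ) : v.mapDomain w ∈ f.support := by
  rwa [mem_support_iff, ← hf w, coeff_rename_mapDomain _ w.injective, ← mem_support_iff]

variable [LinearOrder σ]

theorem antitone_lex_degree [WellFoundedGT σ] {f : MvPolynomial σ R} (hf : f.IsSymmetric) :
    Antitone (lex.degree f) :=
  hf.antitone_supDegree

theorem mapDomain_perm_lex_le [Finite σ] {d : σ →₀ ℕ} (hd : Antitone d) (w : Perm σ) :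
    d.mapDomain w ≼[lex] d := by
  cases nonempty_fintype σ
  rw [← not_lt, lex_lt_iff, Finsupp.Lex.lt_iff]
  rintro ⟨i, hagree, hlt⟩
  simp only [Finsupp.mapDomain_equiv_apply, ofLex_toLex] at hagree hlt
  set larger := univ.filter fun a ↦ d i < d a
  have hmaps : Set.MapsTo w.symm (insert i larger : Finset σ) larger := by
    intro a ha
    obtain rfl | ha := mem_insert.1 (mem_coe.1 ha)
    · simpa [larger] using hlt
    · have hia : d i < d a := (mem_filter.1 ha).2
      have hai : a < i := not_le.1 fun h ↦ (hd h).not_gt hia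
      simpa [larger, ← hagree a hai] using hia
  have hcard := card_le_card_of_injOn w.symm hmaps w.symm.injective.injOn
  rw [card_insert_of_notMem (by simp [larger])] at hcard
  exact Nat.not_succ_le_self _ hcard

end Symmetric

section Alternating

variable {σ R : Type*} [CommRing R]

theorem X_sub_C_mul_X_ne_zero [Nontrivial R] {i j : σ} (hij : i ≠ j) (c : R) :
    (X i - C c * X j : MvPolynomial σ R) ≠ 0 := fun h ↦ by
  classical simpa [hij.symm] using congrArg (eval (Pi.single i 1)) h

theorem irreducible_X_sub_X [IsDomain R] {i j : σ} (hij : i ≠ j) :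
    Irreducible (X i - X j : MvPolynomial σ R) := by
  classical
  have hdvd : ∀ r : R, (∀ a, r ∣ (Finsupp.single i 1 - Finsupp.single j 1 : σ →₀ R) a) → IsUnit r :=
    fun r hr ↦ isUnit_of_dvd_one (by simpa [hij] using hr i)
  have h := irreducible_sumSMulX (c := (Finsupp.single i 1 - Finsupp.single j 1 : σ →₀ R))
    ⟨i, by simp [hij]⟩ hdvd
  simpa [sumSMulX] using h

theorem isRelPrime_X_sub_X [IsDomain R] {i j i' j' : σ} (hij : i ≠ j) (hij' : i' ≠ j')
    (h : s(i, j) ≠ s(i', j')) : IsRelPrime (X i - X j : MvPolynomial σ R) (X i' - X j') := by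
  classical
  rw [(irreducible_X_sub_X hij).isRelPrime_iff_not_dvd]
  intro hdvd
  obtain ⟨a, ha, hai, haj⟩ : ∃ a, (a = i' ∨ a = j') ∧ i ≠ a ∧ j ≠ a := by
    by_contra! hall
    have := hall i' (.inl rfl)
    have := hall j' (.inr rfl)
    rw [Ne, Sym2.eq_iff] at h
    grind
  have heval := map_dvd (eval (Pi.single a 1)) hdvd
  obtain rfl | rfl := ha <;> simp [hai.symm, haj.symm, hij', hij'.symm] at heval

variable [DecidableEq σ]

theorem X_sub_X_dvd_of_rename_swap_eq_neg (h2 : IsUnit (2 : R)) {i j : σ} {f : MvPolynomial σ R}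
    (hf : rename (swap i j) f = -f) : X i - X j ∣ f := by
  rw [← Ideal.mem_span_singleton, ← Ideal.Quotient.eq_zero_iff_mem]
  set I := Ideal.span {(X i - X j : MvPolynomial σ R)}
  have hij : Ideal.Quotient.mk I (X i) = Ideal.Quotient.mk I (X j) :=
    Ideal.Quotient.eq.2 (Ideal.mem_span_singleton_self _)
  have hswap : (Ideal.Quotient.mkₐ R I).comp (rename (swap i j)) = Ideal.Quotient.mkₐ R I := by
    refine algHom_ext fun a ↦ ?_
    rw [AlgHom.comp_apply, rename_X, swap_apply_def]
    split_ifs with hi hj <;> simp [*]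
  have hneg : -Ideal.Quotient.mk I f = Ideal.Quotient.mk I f := by
    rw [← map_neg, ← hf]
    exact DFunLike.congr_fun hswap f
  rw [← h2.smul_eq_zero, two_smul, ← eq_neg_iff_add_eq_zero, hneg]

variable [Fintype σ]

/-- The antisymmetrization `∑ w, sign w • w f` of a polynomial `f`. -/
noncomputable def alternate (f : MvPolynomial σ R) : MvPolynomial σ R :=
  ∑ w : Perm σ, (Perm.sign w : ℤ) • rename w f

theorem rename_alternate (f : MvPolynomial σ R) (v : Perm σ) :
    rename v (alternate f) = (Perm.sign v : ℤ) • alternate f := by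
  rw [alternate, map_sum, smul_sum]
  conv_rhs => rw [← Equiv.sum_comp (Equiv.mulLeft v)]
  refine sum_congr rfl fun w _ ↦ ?_
  rw [map_zsmul, rename_rename, smul_smul, coe_mulLeft, Perm.sign_mul, ← Units.val_mul,
    ← mul_assoc, Int.units_mul_self, one_mul, Perm.coe_mul]

end Alternating

section Vandermonde

variable {n : ℕ}

theorem prodLT_eq_prod_Ioi (n : ℕ) (c : ℂ) :
    prodLT n c = ∏ i : Fin n, ∏ j ∈ Ioi i, (X i - C c * X j) := by
  rw [prodLT]
  exact prod_finset_product _ _ _ (by simp)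

theorem prodLT_ne_zero (n : ℕ) (c : ℂ) : prodLT n c ≠ 0 :=
  prod_ne_zero_iff.2 fun _ hp ↦ X_sub_C_mul_X_ne_zero (mem_filter.1 hp).2.ne _

theorem rename_prodLT (c : ℂ) (w : Perm (Fin n)) :
    rename w (prodLT n c) = ∏ i, ∏ j ∈ Ioi i, (X (w i) - C c * X (w j)) := by
  simp [prodLT_eq_prod_Ioi, map_prod]

theorem rename_prodLT_one (w : Perm (Fin n)) :
    rename w (prodLT n 1) = (Perm.sign w : ℤ) • prodLT n 1 := by
  rw [rename_prodLT, prodLT_eq_prod_Ioi, zsmul_eq_mul]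
  exact w.prod_Ioi_comp_eq_sign_mul_prod (f := fun i j ↦ X i - C 1 * X j) (by simp)

theorem prodLT_one_dvd {f : MvPolynomial (Fin n) ℂ}
    (hf : ∀ w : Perm (Fin n), rename w f = (Perm.sign w : ℤ) • f) : prodLT n 1 ∣ f := by
  refine prod_dvd_of_isRelPrime (fun p hp q hq hpq ↦ ?_) fun p hp ↦ ?_
  · have hp : p.1 < p.2 := (mem_filter.1 (mem_coe.1 hp)).2
    have hq : q.1 < q.2 := (mem_filter.1 (mem_coe.1 hq)).2
    simp only [Function.onFun, C_1, one_mul]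
    refine isRelPrime_X_sub_X hp.ne hq.ne fun h ↦ ?_
    obtain h | h := Sym2.eq_iff.1 h
    · exact hpq (Prod.ext h.1 h.2)
    · exact hp.not_gt (h.1 ▸ h.2 ▸ hq)
  · rw [C_1, one_mul]
    refine X_sub_X_dvd_of_rename_swap_eq_neg (by simp) ?_
    simp [hf, Perm.sign_swap (mem_filter.1 hp).2.ne]

theorem isSymmetric_of_rename_prodLT_one_mul {f : MvPolynomial (Fin n) ℂ}
    (hf : ∀ w : Perm (Fin n), rename w (prodLT n 1 * f) = (Perm.sign w : ℤ) • (prodLT n 1 * f)) :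
    f.IsSymmetric := fun w ↦ by
  have h := hf w
  rw [map_mul, rename_prodLT_one, smul_mul_assoc] at h
  exact mul_left_cancel₀ (prodLT_ne_zero n 1) (smul_right_injective _ (by simp) h)

end Vandermonde

section Inversions

variable {R : Type*} [CommSemiring R] (t : R) {n : ℕ}

/-- The weight `t ^ inv w`, where `inv w` is the number of inversions of `w`. -/
def invWeight (w : Perm (Fin n)) : R :=
  ∏ i, ∏ j ∈ Ioi i, if w i < w j then 1 else t

/-- The `t`-factorial `∏_{j=1}^m (1 + t + ⋯ + t^{j-1})`. -/
def qFactorial (m : ℕ) : R :=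
  ∏ j ∈ range m, ∑ r ∈ range (j + 1), t ^ r

/-- The permutation of `Fin (n + 1)` whose one-line notation is `p` followed by that of `w`, with
the values of `w` shifted so as to avoid `p`. -/
def consPerm (p : Fin (n + 1)) (w : Perm (Fin n)) : Perm (Fin (n + 1)) :=
  p.cycleRange.symm * Perm.decomposeFin.symm (0, w)

@[simp]
theorem consPerm_zero (p : Fin (n + 1)) (w : Perm (Fin n)) : consPerm p w 0 = p := by
  simp [consPerm]

@[simp]
theorem consPerm_succ (p : Fin (n + 1)) (w : Perm (Fin n)) (i : Fin n) :
    consPerm p w i.succ = p.succAbove (w i) := by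
  simp [consPerm]

theorem bijective_consPerm :
    Function.Bijective fun q : Fin (n + 1) × Perm (Fin n) ↦ consPerm q.1 q.2 := by
  rw [Fintype.bijective_iff_injective_and_card]
  refine ⟨fun ⟨p, w⟩ ⟨p', w'⟩ h ↦ ?_, by simp [Fintype.card_perm, Nat.factorial_succ]⟩
  obtain rfl : p = p' := by simpa using DFunLike.congr_fun h 0
  exact congrArg _ (Equiv.ext fun i ↦ by simpa using DFunLike.congr_fun h i.succ)

theorem prod_lt_succAbove (p : Fin (n + 1)) :
    ∏ j : Fin n, (if p < p.succAbove j then 1 else t) = t ^ (p : ℕ) := by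
  have hcard : #{j : Fin n | (j : ℕ) < p} = p := by
    rw [Fin.card_filter_val_lt, min_eq_right p.is_le]
  simp_rw [Fin.lt_succAbove_iff_le_castSucc, Fin.le_def, Fin.val_castSucc]
  simp [prod_ite, not_le, hcard]

theorem invWeight_consPerm (p : Fin (n + 1)) (w : Perm (Fin n)) :
    invWeight t (consPerm p w) = t ^ (p : ℕ) * invWeight t w := by
  rw [invWeight, Fin.prod_univ_succ, Fin.Ioi_zero_eq_map, prod_map]
  congr 1
  · simp only [Fin.coe_succEmb, consPerm_zero, consPerm_succ]
    rw [← prod_lt_succAbove, ← Equiv.prod_comp w fun j ↦ if p < p.succAbove j then 1 else t]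
  · refine prod_congr rfl fun i _ ↦ ?_
    rw [Fin.Ioi_succ, prod_map]
    simp

variable {α : Type*} [PartialOrder α]

theorem apply_succAbove_of_antitone {l : Fin (n + 1) → α} (hl : Antitone l) {p : Fin (n + 1)}
    (hp : l p = l 0) (j : Fin n) : l (p.succAbove j) = l j.succ := by
  obtain hj | hj := lt_or_ge j.castSucc p
  · rw [Fin.succAbove_of_castSucc_lt _ _ hj]
    refine le_antisymm ?_ (hl j.castSucc_lt_succ.le)
    calc l j.castSucc ≤ l 0 := hl (Fin.zero_le _)
      _ = l p := hp.symm
      _ ≤ l j.succ := hl hj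
  · rw [Fin.succAbove_of_le_castSucc _ _ hj]

theorem comp_consPerm_eq_iff {l : Fin (n + 1) → α} (hl : Antitone l) (p : Fin (n + 1))
    (w : Perm (Fin n)) :
    l ∘ consPerm p w = l ↔ l p = l 0 ∧ (l ∘ Fin.succ) ∘ w = l ∘ Fin.succ := by
  rw [funext_iff, Fin.forall_fin_succ, funext_iff]
  simp only [Function.comp_apply, consPerm_zero, consPerm_succ]
  exact and_congr_right fun hp ↦ by simp only [apply_succAbove_of_antitone hl hp]

variable [DecidableEq α]

theorem sum_pow_filter_eq_apply_zero {l : Fin (n + 1) → α} (hl : Antitone l) :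
    ∑ p with l p = l 0, t ^ (p : ℕ) = ∑ r ∈ range #{p | l p = l 0}, t ^ r := by
  set m := #{p | l p = l 0}
  have hmem : ∀ p, l p = l 0 ↔ (p : ℕ) < m := fun p ↦
    (Fin.lt_card_filter_univ_iff_apply_of_imp (l · = l 0) fun i j hji hi ↦
      (hl (Fin.zero_le j)).antisymm (hi ▸ hl hji)).symm
  have hm : m ≤ n + 1 := card_le_univ _ |>.trans_eq (Fintype.card_fin _)
  have hrange : {r ∈ range (n + 1) | r < m} = range m := by
    grind
  simp only [hmem]
  rw [sum_filter, Fin.sum_univ_eq_sum_range fun r ↦ if r < m then t ^ r else 0, ← sum_filter,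
    hrange]

theorem sum_invWeight_filter_comp_eq_succ {l : Fin (n + 1) → α} (hl : Antitone l) :
    ∑ w ∈ {w : Perm (Fin (n + 1)) | l ∘ w = l}, invWeight t w =
      (∑ r ∈ range #{p | l p = l 0}, t ^ r) *
        ∑ w ∈ {w : Perm (Fin n) | (l ∘ Fin.succ) ∘ w = l ∘ Fin.succ}, invWeight t w := by
  rw [← sum_pow_filter_eq_apply_zero t hl, sum_mul_sum, ← sum_product', sum_filter,
    ← bijective_consPerm.sum_comp, ← filter_product, univ_product_univ, sum_filter]
  simp only [comp_consPerm_eq_iff hl, invWeight_consPerm]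

theorem sum_invWeight_filter_comp_eq {l : Fin n → α} (hl : Antitone l) {s : Finset α}
    (hs : ∀ a, l a ∈ s) :
    ∑ w ∈ {w : Perm (Fin n) | l ∘ w = l}, invWeight t w = ∏ i ∈ s, qFactorial t #{a | l a = i} := by
  induction n with
  | zero => simp [invWeight, qFactorial, Subsingleton.elim _ l]
  | succ n ih =>
    have hstep : ∀ i, qFactorial t #{a | l a = i} =
        (if l 0 = i then ∑ r ∈ range #{a | l a = l 0}, t ^ r else 1) *
          qFactorial t #{a | (l ∘ Fin.succ) a = i} := fun i ↦ by
      rw [Fin.card_filter_univ_succ]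
      split_ifs with hi
      · subst hi
        simp [Fin.card_filter_univ_succ, qFactorial, prod_range_succ, mul_comm]
      · simp
    rw [sum_invWeight_filter_comp_eq_succ t hl, prod_congr rfl fun i _ ↦ hstep i,
      prod_mul_distrib, prod_ite_eq, if_pos (hs 0),
      ih (hl.comp_monotone Fin.strictMono_succ.monotone) fun a ↦ hs a.succ]

end Inversions

theorem hlCoeff_mul_sum_invWeight {n : ℕ} {t : ℂ} {l : Fin n → ℕ} (hl : Antitone l)
    (ht : ∀ i, ∀ j < #{a | l a = i}, t ^ (j + 1) ≠ 1) :
    hlCoeff n t l * ∑ w ∈ {w : Perm (Fin n) | l ∘ w = l}, invWeight t w = 1 := by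
  have hs : ∀ a, l a ∈ range (∑ b, l b + 1) := fun a ↦
    mem_range_succ_iff.2 (single_le_sum (fun _ _ ↦ Nat.zero_le _) (mem_univ a))
  rw [sum_invWeight_filter_comp_eq t hl hs, hlCoeff, ← prod_mul_distrib]
  refine prod_eq_one fun i _ ↦ ?_
  rw [qFactorial, ← prod_mul_distrib]
  refine prod_eq_one fun j hj ↦ ?_
  rw [div_mul_eq_mul_div, mul_neg_geom_sum, div_self]
  exact sub_ne_zero.2 (ht i j (mem_range.1 hj)).symm

section LeadingTerm

variable {σ R : Type*} [LinearOrder σ] [WellFoundedGT σ] [CommRing R] {i j : σ} {c : R}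

theorem degree_C_mul_X_lex [Nontrivial R] (hc : c ≠ 0) (i : σ) :
    lex.degree (C c * X i : MvPolynomial σ R) = Finsupp.single i 1 := by
  classical rw [C_mul_X_eq_monomial, degree_monomial, if_neg hc]

theorem degree_C_mul_X_lex_lt [Nontrivial R] (hc : c ≠ 0) {d : R} (hd : d ≠ 0) (hij : i < j) :
    lex.degree (C d * X j : MvPolynomial σ R) ≺[lex] lex.degree (C c * X i) := by
  rw [degree_C_mul_X_lex hd, degree_C_mul_X_lex hc]
  exact lex_lt_iff.2 (Finsupp.Lex.single_lt_iff.2 hij)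

theorem degree_X_sub_C_mul_X_lex (hc : c ≠ 0) (hij : i ≠ j) :
    lex.degree (X i - C c * X j : MvPolynomial σ R) = Finsupp.single (min i j) 1 := by
  have := nontrivial_of_ne _ _ hc
  rw [← one_mul (X i), ← C_1]
  obtain h | h := hij.lt_or_gt
  · rw [degree_sub_of_lt (degree_C_mul_X_lex_lt one_ne_zero hc h), min_eq_left h.le,
      degree_C_mul_X_lex one_ne_zero]
  · rw [← neg_sub, degree_neg, degree_sub_of_lt (degree_C_mul_X_lex_lt hc one_ne_zero h),
      min_eq_right h.le, degree_C_mul_X_lex hc]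

theorem leadingCoeff_X_sub_C_mul_X_lex (hc : c ≠ 0) (hij : i ≠ j) :
    lex.leadingCoeff (X i - C c * X j : MvPolynomial σ R) = if i < j then 1 else -c := by
  have := nontrivial_of_ne _ _ hc
  have hsingle : Finsupp.single i 1 ≠ Finsupp.single j 1 :=
    (Finsupp.single_left_injective one_ne_zero).ne hij
  rw [leadingCoeff, degree_X_sub_C_mul_X_lex hc hij]
  obtain h | h := hij.lt_or_gt
  · simp [h, h.le, coeff_X, hsingle.symm]
  · simp [h.le, h.not_gt, coeff_X, hsingle]

end LeadingTerm

theorem leadingCoeff_prod {σ ι R : Type*} [CommRing R] [IsDomain R] (m : MonomialOrder σ)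
    (s : Finset ι) (f : ι → MvPolynomial σ R) :
    m.leadingCoeff (∏ i ∈ s, f i) = ∏ i ∈ s, m.leadingCoeff (f i) :=
  map_prod (⟨⟨m.leadingCoeff, m.leadingCoeff_one⟩, fun _ _ ↦ leadingCoeff_mul⟩ :
    MvPolynomial σ R →* R) f s

section Alternant

variable {n : ℕ} {t : ℂ}

theorem rename_prodLT_ne_zero (t : ℂ) (w : Perm (Fin n)) : rename w (prodLT n t) ≠ 0 :=
  (map_ne_zero_iff _ (rename_injective w w.injective)).2 (prodLT_ne_zero n t)

theorem degree_rename_prodLT_eq_sum (ht : t ≠ 0) (w : Perm (Fin n)) :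
    lex.degree (rename w (prodLT n t)) =
      ∑ i, ∑ j ∈ Ioi i, Finsupp.single (min (w i) (w j)) 1 := by
  have hne : ∀ i, ∀ j ∈ Ioi i, w i ≠ w j := fun i j hj ↦ w.injective.ne (mem_Ioi.1 hj).ne
  have hfactor : ∀ i, ∀ j ∈ Ioi i, (X (w i) - C t * X (w j) : MvPolynomial (Fin n) ℂ) ≠ 0 :=
    fun i j hj ↦ X_sub_C_mul_X_ne_zero (hne i j hj) t
  rw [rename_prodLT, degree_prod fun i _ ↦ prod_ne_zero_iff.2 (hfactor i)]
  refine sum_congr rfl fun i _ ↦ ?_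
  rw [degree_prod (hfactor i)]
  exact sum_congr rfl fun j hj ↦ degree_X_sub_C_mul_X_lex ht (hne i j hj)

theorem degree_sign_smul {σ : Type*} [Fintype σ] [DecidableEq σ] {R : Type*} [CommRing R]
    (m : MonomialOrder σ) (w : Perm σ) (f : MvPolynomial σ R) :
    m.degree ((Perm.sign w : ℤ) • f) = m.degree f := by
  obtain h | h := Int.units_eq_one_or (Perm.sign w) <;> simp [h]

theorem degree_rename_prodLT (ht : t ≠ 0) (w : Perm (Fin n)) :
    lex.degree (rename w (prodLT n t)) = lex.degree (prodLT n 1) := by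
  -- The leading exponent does not depend on `t`, and at `t = 1` permuting only changes the sign.
  rw [degree_rename_prodLT_eq_sum ht, ← degree_rename_prodLT_eq_sum one_ne_zero,
    rename_prodLT_one, degree_sign_smul]

theorem sign_mul_leadingCoeff_rename_prodLT (ht : t ≠ 0) (w : Perm (Fin n)) :
    ((Perm.sign w : ℤ) : ℂ) * lex.leadingCoeff (rename w (prodLT n t)) = invWeight t w := by
  rw [rename_prodLT, Perm.sign_eq_prod_prod_Ioi, leadingCoeff_prod, invWeight]
  simp only [Units.coe_prod, Int.cast_prod, leadingCoeff_prod, ← prod_mul_distrib]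
  refine prod_congr rfl fun i _ ↦ prod_congr rfl fun j hj ↦ ?_
  rw [leadingCoeff_X_sub_C_mul_X_lex ht (w.injective.ne (mem_Ioi.1 hj).ne)]
  split_ifs <;> simp

theorem degree_rename_monomial_mul_prodLT (ht : t ≠ 0) (d : Fin n →₀ ℕ) (w : Perm (Fin n)) :
    lex.degree (rename w (monomial d 1 * prodLT n t)) =
      d.mapDomain w + lex.degree (prodLT n 1) := by
  rw [map_mul, rename_monomial, degree_mul (by simp) (rename_prodLT_ne_zero t w),
    degree_monomial, if_neg one_ne_zero, degree_rename_prodLT ht]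

theorem degree_alternate_monomial_mul_prodLT_le (ht : t ≠ 0) {d : Fin n →₀ ℕ} (hd : Antitone d) :
    lex.degree (alternate (monomial d 1 * prodLT n t)) ≼[lex] d + lex.degree (prodLT n 1) := by
  refine degree_sum_le.trans (Finset.sup_le fun w _ ↦ ?_)
  rw [degree_sign_smul, degree_rename_monomial_mul_prodLT ht, map_add, map_add]
  exact add_le_add_left (mapDomain_perm_lex_le hd w) _

theorem mapDomain_perm_eq_iff {σ : Type*} (d : σ →₀ ℕ) (w : Perm σ) :
    d.mapDomain w = d ↔ d ∘ w = d := by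
  have hcoe : ⇑(d.mapDomain w) = d ∘ w.symm :=
    _root_.funext fun i ↦ Finsupp.mapDomain_equiv_apply d i
  rw [← DFunLike.coe_fn_eq (f := d.mapDomain w), hcoe, comp_symm_eq, eq_comm]

theorem coeff_sign_smul_rename_monomial_mul_prodLT (ht : t ≠ 0) {d : Fin n →₀ ℕ}
    (hd : Antitone d) (w : Perm (Fin n)) :
    coeff (d + lex.degree (prodLT n 1))
        ((Perm.sign w : ℤ) • rename w (monomial d 1 * prodLT n t)) =
      if d ∘ w = d then invWeight t w else 0 := by
  have hdegree := degree_rename_monomial_mul_prodLT ht d w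
  rw [← Int.cast_smul_eq_zsmul ℂ, coeff_smul, smul_eq_mul]
  split_ifs with hw <;> rw [← mapDomain_perm_eq_iff] at hw
  · rw [hw] at hdegree
    rw [← sign_mul_leadingCoeff_rename_prodLT ht, ← hdegree]
    congr 1
    change lex.leadingCoeff _ = _
    rw [map_mul, leadingCoeff_mul, rename_monomial, leadingCoeff_monomial, one_mul]
  · have hlt : d.mapDomain w ≺[lex] d :=
      (mapDomain_perm_lex_le hd w).lt_of_ne (lex.toSyn.injective.ne hw)
    rw [coeff_eq_zero_of_lt (m := lex), mul_zero]
    rw [hdegree, map_add, map_add]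
    exact add_lt_add_left hlt _

theorem coeff_alternate_monomial_mul_prodLT (ht : t ≠ 0) {d : Fin n →₀ ℕ} (hd : Antitone d) :
    coeff (d + lex.degree (prodLT n 1)) (alternate (monomial d 1 * prodLT n t)) =
      ∑ w ∈ {w : Perm (Fin n) | d ∘ w = d}, invWeight t w := by
  rw [alternate, coeff_sum, sum_filter]
  exact sum_congr rfl fun w _ ↦ coeff_sign_smul_rename_monomial_mul_prodLT ht hd w

end Alternant

section IsHallLittlewood

variable {n : ℕ} {t : ℂ}

theorem isHallLittlewood_iff (d : Fin n →₀ ℕ) (P : MvPolynomial (Fin n) ℂ) :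
    IsHallLittlewood n t d P ↔
      prodLT n 1 * P = C (hlCoeff n t d) * alternate (monomial d 1 * prodLT n t) := by
  simp [IsHallLittlewood, alternate, monomial_eq, Finsupp.prod_fintype]

theorem rename_C_mul_alternate (c : ℂ) (f : MvPolynomial (Fin n) ℂ) (w : Perm (Fin n)) :
    rename w (C c * alternate f) = (Perm.sign w : ℤ) • (C c * alternate f) := by
  rw [map_mul, rename_C, rename_alternate, mul_smul_comm]

theorem exists_isHallLittlewood (t : ℂ) (l : Fin n → ℕ) : ∃ P, IsHallLittlewood n t l P :=
  (prodLT_one_dvd (rename_C_mul_alternate _ _)).imp fun _ ↦ Eq.symm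

variable {P : MvPolynomial (Fin n) ℂ}

theorem _root_.IsHallLittlewood.isSymmetric {l : Fin n → ℕ} (hP : IsHallLittlewood n t l P) :
    P.IsSymmetric :=
  isSymmetric_of_rename_prodLT_one_mul (hP ▸ rename_C_mul_alternate _ _)

variable {d : Fin n →₀ ℕ} (hP : IsHallLittlewood n t d P) (hd : Antitone d) (ht₀ : t ≠ 0)
  (ht : ∀ i, ∀ j < #{a | d a = i}, t ^ (j + 1) ≠ 1)
include hP hd ht₀ ht

theorem _root_.IsHallLittlewood.coeff_prodLT_one_mul :
    coeff (d + lex.degree (prodLT n 1)) (prodLT n 1 * P) = 1 := by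
  rw [(isHallLittlewood_iff d P).1 hP, coeff_C_mul,
    coeff_alternate_monomial_mul_prodLT ht₀ hd, hlCoeff_mul_sum_invWeight hd ht]

theorem _root_.IsHallLittlewood.ne_zero : P ≠ 0 := by
  rintro rfl
  simpa using hP.coeff_prodLT_one_mul hd ht₀ ht

theorem _root_.IsHallLittlewood.lex_degree_eq : lex.degree P = d := by
  have hcoeff := hP.coeff_prodLT_one_mul hd ht₀ ht
  have hne := hP.ne_zero hd ht₀ ht
  have hdegree : lex.degree (prodLT n 1 * P) = d + lex.degree (prodLT n 1) := by
    refine lex.toSyn.injective (le_antisymm ?_ (le_degree (mem_support_iff.2 (by simp [hcoeff]))))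
    rw [(isHallLittlewood_iff d P).1 hP, ← smul_eq_C_mul]
    exact degree_smul_le.trans (degree_alternate_monomial_mul_prodLT_le ht₀ hd)
  rw [degree_mul (prodLT_ne_zero n 1) hne, add_comm] at hdegree
  exact add_right_cancel hdegree

end IsHallLittlewood

section Collapse

variable {σ R : Type*} [DecidableEq σ] [CommRing R]

/-- The substitution sending `x_j` to `c_j x_a` for `j ∈ S` and fixing the other variables. -/
noncomputable def collapse (S : Finset σ) (c : σ → R) (a : σ) :
    MvPolynomial σ R →ₐ[R] MvPolynomial σ R :=
  aeval fun j ↦ if j ∈ S then C (c j) * X a else X j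

variable {S : Finset σ} {c : σ → R} {a : σ}

theorem eval_collapse (f : MvPolynomial σ R) (y : σ → R) :
    eval y (collapse S c a f) = eval (fun j ↦ if j ∈ S then c j * y a else y j) f := by
  rw [collapse, ← coe_aeval_eq_eval, ← coe_aeval_eq_eval]
  change aeval y (aeval _ f) = aeval _ f
  rw [← AlgHom.comp_apply, comp_aeval]
  congr 2
  ext j
  split_ifs <;> simp

theorem eval_eq_zero_of_collapse_eq_zero (ha : a ∈ S) {f : MvPolynomial σ R}
    (hf : collapse S c a f = 0) (x : R) (y : σ → R) :
    eval (fun j ↦ if j ∈ S then c j * x else y j) f = 0 := by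
  have h := eval_collapse (S := S) (c := c) (a := a) f (Function.update y a x)
  rw [hf, map_zero, Function.update_self] at h
  rw [h]
  congr 2
  ext j
  split_ifs with hj
  · rfl
  · rw [Function.update_of_ne (ne_of_mem_of_not_mem ha hj).symm]

theorem collapse_X_sub_X_ne_zero [Nontrivial R] (ha : a ∈ S) (hc : Set.InjOn c S) {i j : σ}
    (hij : i ≠ j) : collapse S c a (X i - X j) ≠ 0 := by
  intro h
  have heval := fun y : σ → R ↦ congrArg (eval y) h
  simp only [eval_collapse, map_sub, eval_X, map_zero, sub_eq_zero] at heval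
  by_cases hi : i ∈ S <;> by_cases hj : j ∈ S <;> simp only [hi, hj, if_true, if_false] at heval
  · exact hij (hc hi hj (by simpa using heval 1))
  · simpa [ne_of_mem_of_not_mem ha hj] using heval (Pi.single j 1)
  · simpa [ne_of_mem_of_not_mem ha hi] using heval (Pi.single i 1)
  · simpa [hij] using heval (Pi.single i 1)

theorem collapse_monomial (v : σ →₀ ℕ) (r : R) :
    collapse S c a (monomial v r) =
      monomial (v.mapDomain fun j ↦ if j ∈ S then a else j)
        (r * v.prod fun j e ↦ (if j ∈ S then c j else 1) ^ e) := by
  have hfactor : ∀ j, (if j ∈ S then C (c j) * X a else X j : MvPolynomial σ R) =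
      C (if j ∈ S then c j else 1) * X (if j ∈ S then a else j) := fun j ↦ by
    split_ifs <;> simp
  simp only [collapse, aeval_monomial, hfactor, mul_pow, Finsupp.prod_mul, algebraMap_eq]
  rw [monomial_eq, Finsupp.prod_mapDomain_index (by simp) (by simp [pow_add]), C_mul, mul_assoc]
  simp only [Finsupp.prod, map_prod, map_pow]

theorem mapDomain_collapse_apply (ha : a ∈ S) (v : σ →₀ ℕ) {i : σ} (hi : i ∉ S) :
    v.mapDomain (fun j ↦ if j ∈ S then a else j) i = v i := by
  have hfiber : ∀ j, (if j ∈ S then a else j) = i ↔ j = i := by grind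
  simpa [Finsupp.mapDomain, Finsupp.sum_apply, Finsupp.single_apply, hfiber] using Eq.symm

end Collapse

section CollapseSymmetric

variable {σ R : Type*} [LinearOrder σ] [WellFoundedGT σ] [CommRing R] {S : Finset σ}
  {f : MvPolynomial σ R} {r : ℕ}

theorem apply_le_of_eq_degree_off (hf : f.IsSymmetric) (hr : ∀ j ∈ S, lex.degree f j = r)
    {v : σ →₀ ℕ} (hv : v ∈ f.support) (hoff : ∀ j ∉ S, v j = lex.degree f j) {j : σ}
    (hj : j ∈ S) : v j ≤ r := by
  set i := S.min' ⟨j, hj⟩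
  have hi : i ∈ S := S.min'_mem _
  have hij : i ≤ j := S.min'_le j hj
  have hle := le_degree (m := lex) (mapDomain_perm_mem_support hf hv (swap i j))
  by_contra! hlt
  -- Moving the exponent `v j > r` to position `i` would give an exponent of `f` above its degree.
  refine hle.not_gt (lex_lt_iff.2 (Finsupp.Lex.lt_iff.2 ⟨i, fun b hb ↦ ?_, ?_⟩))
  · have hbS : b ∉ S := fun h ↦ (S.min'_le b h).not_gt hb
    simp [Finsupp.mapDomain_equiv_apply, swap_apply_of_ne_of_ne hb.ne (hb.trans_le hij).ne,
      hoff b hbS]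
  · simpa [Finsupp.mapDomain_equiv_apply, hr i hi] using hlt

theorem eq_degree_of_mapDomain_collapse_eq {a : σ} (ha : a ∈ S) (hf : f.IsSymmetric)
    (hr : ∀ j ∈ S, lex.degree f j = r) {v : σ →₀ ℕ} (hv : v ∈ f.support)
    (hcollapse : v.mapDomain (fun j ↦ if j ∈ S then a else j) =
      (lex.degree f).mapDomain fun j ↦ if j ∈ S then a else j) : v = lex.degree f := by
  have hoff : ∀ j ∉ S, v j = lex.degree f j := fun j hj ↦ by
    rw [← mapDomain_collapse_apply ha v hj, hcollapse, mapDomain_collapse_apply ha _ hj]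
  have hle : v ≤ lex.degree f := fun j ↦ by
    by_cases hj : j ∈ S
    · exact (apply_le_of_eq_degree_off hf hr hv hoff hj).trans_eq (hr j hj).symm
    · exact (hoff j hj).le
  have hsum : v.degree = (lex.degree f).degree := by
    rw [← Finsupp.degree_mapDomain, hcollapse, Finsupp.degree_mapDomain]
  rw [← tsub_add_cancel_of_le hle, map_add, right_eq_add, Finsupp.degree_eq_zero_iff] at hsum
  rw [← tsub_add_cancel_of_le hle, hsum, zero_add]

theorem collapse_ne_zero [IsDomain R] {c : σ → R} {a : σ} (ha : a ∈ S) (hc : ∀ j ∈ S, c j ≠ 0)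
    (hf : f.IsSymmetric) (hf₀ : f ≠ 0) (hr : ∀ j ∈ S, lex.degree f j = r) :
    collapse S c a f ≠ 0 := by
  set d := lex.degree f
  intro h
  have hcoeff := congrArg (coeff (d.mapDomain fun j ↦ if j ∈ S then a else j)) h
  have hd : d ∈ f.support := degree_mem_support_iff .. |>.2 hf₀
  rw [f.as_sum, map_sum, coeff_sum, sum_eq_single_of_mem d hd, collapse_monomial, coeff_monomial,
    if_pos rfl, coeff_zero] at hcoeff
  · refine mul_ne_zero (mem_support_iff.1 hd) (prod_ne_zero_iff.2 fun j _ ↦ pow_ne_zero _ ?_) hcoeff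
    split_ifs with hj
    exacts [hc j hj, one_ne_zero]
  · intro v hv hvd
    rw [collapse_monomial, coeff_monomial, if_neg]
    exact fun hcollapse ↦ hvd (eq_degree_of_mapDomain_collapse_eq ha hf hr hv hcollapse)

end CollapseSymmetric

section WheelCondition

variable {R : Type*} [CommRing R] {k n : ℕ} {t : R}

/-- The space `F_n^{(k,2)}` of symmetric polynomials vanishing at
`(x, tx, …, t^k x, x_{k+2}, …, x_n)`; the indices of the specialized variables are `0, …, k`. -/
def wheelSubmodule (k n : ℕ) (t : R) : Submodule R (MvPolynomial (Fin n) R) where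
  carrier := {f | f.IsSymmetric ∧ ∀ (x : R) (y : Fin n → R),
    eval (fun j : Fin n ↦ if (j : ℕ) ≤ k then t ^ (j : ℕ) * x else y j) f = 0}
  zero_mem' := ⟨IsSymmetric.zero, by simp⟩
  add_mem' hf hg := ⟨hf.1.add hg.1, by simp [hf.2, hg.2]⟩
  smul_mem' c f hf := ⟨hf.1.smul c, by simp [hf.2]⟩

theorem card_degree_eq_le [IsDomain R] [Infinite R] (ht : t ≠ 0)
    {f : MvPolynomial (Fin n) R} (hf : f ∈ wheelSubmodule k n t) (hf₀ : f ≠ 0) (r : ℕ) :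
    #{a | lex.degree f a = r} ≤ k := by
  obtain ⟨hsymm, hvanish⟩ := hf
  by_contra! hcard
  have hn : k + 1 ≤ n := hcard.trans_le ((card_le_univ _).trans_eq (Fintype.card_fin n))
  obtain ⟨S, hSr, hS⟩ := exists_subset_card_eq hcard
  have hblock : #{j : Fin n | (j : ℕ) < k + 1} = #S := by
    rw [Fin.card_filter_val_lt, min_eq_right hn, hS]
  obtain ⟨w, rfl⟩ := Perm.exists_map_finset_eq _ S hblock
  obtain ⟨a, ha⟩ := card_pos.1 (hS ▸ k.succ_pos)
  refine collapse_ne_zero (c := fun i ↦ t ^ (w.symm i : ℕ)) ha (fun _ _ ↦ pow_ne_zero _ ht) hsymm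
    hf₀ (fun j hj ↦ (mem_filter.1 (hSr hj)).2) (MvPolynomial.funext fun y ↦ ?_)
  rw [eval_collapse, ← hsymm w, eval_rename, map_zero, ← hvanish (y a) (y ∘ w)]
  congr 2
  ext j
  simp

end WheelCondition

section Vanishing

variable {k n : ℕ} {t : ℂ}

theorem aeval_rename_prodLT_eq_zero {A : Type*} [CommRing A] [Algebra ℂ A] {z : Fin n → A}
    {S : Finset (Fin n)} (hS : S.Nonempty) (hz : ∀ a ∈ S, ∃ b ∈ S, b ≠ a ∧ z b = t • z a)
    (w : Perm (Fin n)) : aeval z (rename w (prodLT n t)) = 0 := by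
  obtain ⟨a, ha, hmax⟩ := exists_max_image S w.symm hS
  obtain ⟨b, hb, hba, hzb⟩ := hz a ha
  have hlt : w.symm b < w.symm a := (hmax b hb).lt_of_ne (w.symm.injective.ne hba)
  rw [prodLT, map_prod, map_prod]
  refine prod_eq_zero (i := (w.symm b, w.symm a)) (by simpa using hlt) ?_
  simp [hzb, Algebra.smul_def]

theorem collapse_prodLT_one_ne_zero {S : Finset (Fin n)} {c : Fin n → ℂ} {a : Fin n} (ha : a ∈ S)
    (hc : Set.InjOn c S) : collapse S c a (prodLT n 1) ≠ 0 := by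
  rw [prodLT, map_prod, prod_ne_zero_iff]
  intro p hp
  rw [C_1, one_mul]
  exact collapse_X_sub_X_ne_zero ha hc (mem_filter.1 hp).2.ne

theorem _root_.IsHallLittlewood.collapse_eq_zero {l : Fin n → ℕ} {P : MvPolynomial (Fin n) ℂ}
    (hP : IsHallLittlewood n t l P) {S : Finset (Fin n)} {c : Fin n → ℂ} {a : Fin n} (ha : a ∈ S)
    (hc : Set.InjOn c S) (hS : ∀ i ∈ S, ∃ j ∈ S, j ≠ i ∧ c j = t * c i) :
    collapse S c a P = 0 := by
  have hterm : ∀ w : Perm (Fin n), collapse S c a (rename w (prodLT n t)) = 0 :=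
    aeval_rename_prodLT_eq_zero ⟨a, ha⟩ fun i hi ↦ (hS i hi).imp fun j ⟨hj, hji, hcj⟩ ↦
      ⟨hj, hji, by simp [hi, hj, hcj, smul_eq_C_mul, mul_assoc]⟩
  refine (mul_eq_zero.1 ?_).resolve_left (collapse_prodLT_one_ne_zero ha hc)
  rw [← map_mul, hP]
  simp [hterm]

theorem _root_.IsHallLittlewood.mem_wheelSubmodule {l : Fin n → ℕ} {P : MvPolynomial (Fin n) ℂ}
    (hP : IsHallLittlewood n t l P) (hk : 0 < k) (ht : IsPrimitiveRoot t (k + 1))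
    (hn : k + 1 ≤ n) : P ∈ wheelSubmodule k n t := by
  refine ⟨hP.isSymmetric, fun x y ↦ ?_⟩
  set S : Finset (Fin n) := {j | (j : ℕ) ≤ k}
  have hmem : ∀ j, j ∈ S ↔ (j : ℕ) ≤ k := by simp [S]
  have hinj : Set.InjOn (fun j : Fin n ↦ t ^ (j : ℕ)) S := fun i hi j hj h ↦
    Fin.ext (ht.pow_inj (Nat.lt_succ_of_le ((hmem i).1 hi)) (Nat.lt_succ_of_le ((hmem j).1 hj)) h)
  have hcycle : ∀ i ∈ S, ∃ j ∈ S, j ≠ i ∧ t ^ (j : ℕ) = t * t ^ (i : ℕ) := fun i hi ↦ by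
    obtain h | h := ((hmem i).1 hi).lt_or_eq
    · exact ⟨⟨i + 1, by lia⟩, (hmem _).2 h, by simp [Fin.ext_iff], pow_succ' t i⟩
    · refine ⟨⟨0, by lia⟩, (hmem _).2 k.zero_le, by simp [Fin.ext_iff, h, hk.ne], ?_⟩
      rw [h, ← pow_succ', ht.pow_eq_one, pow_zero]
  have hzero : (⟨0, by lia⟩ : Fin n) ∈ S := (hmem _).2 k.zero_le
  simpa only [hmem] using
    eval_eq_zero_of_collapse_eq_zero hzero (hP.collapse_eq_zero hzero hinj hcycle) x y

end Vanishing

section Admissible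

variable {k n : ℕ}

/-- A partition, as a weakly decreasing function on `Fin n`, is admissible if each value, including
`0`, occurs at most `k` times. -/
def IsAdmissible (k : ℕ) (l : Fin n → ℕ) : Prop :=
  Antitone l ∧ ∀ i, #{a | l a = i} ≤ k

theorem isAdmissible_lex_degree {R : Type*} [CommRing R] [IsDomain R] [Infinite R] {t : R}
    (ht : t ≠ 0) {f : MvPolynomial (Fin n) R} (hf : f ∈ wheelSubmodule k n t) (hf₀ : f ≠ 0) :
    IsAdmissible k (lex.degree f) :=
  ⟨antitone_lex_degree hf.1, card_degree_eq_le ht hf hf₀⟩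

variable {t : ℂ} (ht : IsPrimitiveRoot t (k + 1)) {l : Fin n → ℕ} (hl : IsAdmissible k l)
  {P : MvPolynomial (Fin n) ℂ}
include ht hl

theorem IsAdmissible.pow_succ_ne_one (i : ℕ) : ∀ j < #{a | l a = i}, t ^ (j + 1) ≠ 1 :=
  fun j hj ↦ ht.pow_ne_one_of_pos_of_lt j.succ_ne_zero (Nat.succ_lt_succ (hj.trans_le (hl.2 i)))

theorem IsAdmissible.hallLittlewood_ne_zero (hP : IsHallLittlewood n t l P) : P ≠ 0 :=
  hP.ne_zero (d := Finsupp.equivFunOnFinite.symm l) hl.1 (ht.ne_zero k.succ_ne_zero)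
    (hl.pow_succ_ne_one ht)

theorem IsAdmissible.lex_degree_hallLittlewood (hP : IsHallLittlewood n t l P) :
    lex.degree P = Finsupp.equivFunOnFinite.symm l :=
  hP.lex_degree_eq (d := Finsupp.equivFunOnFinite.symm l) hl.1 (ht.ne_zero k.succ_ne_zero)
    (hl.pow_succ_ne_one ht)

end Admissible

end HallLittlewood

/-- the Hall–Littlewood polynomials `P_λ(x_1,…,x_n;t)`, with `λ` ranging over
the admissible partitions in `π_n` (each value occurring at most `k` times), are well
defined at the primitive `(k+1)`-th root of unity `t`, lie in `F_n^{(k,2)}`, and form a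
basis of `F_n^{(k,2)}`. -/
theorem hall_littlewood_basis_of_Fk2
    (k n : ℕ) (hk : 0 < k) (t : ℂ) (ht : IsPrimitiveRoot t (k + 1)) (hn : k + 1 ≤ n) :
    ∃ P : {l : Fin n → ℕ // Antitone l ∧
            ∀ i : ℕ, (Finset.univ.filter fun a : Fin n => l a = i).card ≤ k}
          → MvPolynomial (Fin n) ℂ,
      (∀ l, IsHallLittlewood n t l.1 (P l)) ∧
      (∀ l, (P l).IsSymmetric ∧
        ∀ (x : ℂ) (y : Fin n → ℂ),
          MvPolynomial.eval
            (fun j : Fin n => if (j : ℕ) ≤ k then t ^ (j : ℕ) * x else y j) (P l) = 0) ∧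
      LinearIndependent ℂ P ∧
      Submodule.span ℂ (Set.range P) =
        Submodule.span ℂ {f : MvPolynomial (Fin n) ℂ |
          f.IsSymmetric ∧
          ∀ (x : ℂ) (y : Fin n → ℂ),
            MvPolynomial.eval
              (fun j : Fin n => if (j : ℕ) ≤ k then t ^ (j : ℕ) * x else y j) f = 0} := by
  choose P hP using HallLittlewood.exists_isHallLittlewood (n := n) t
  have hmem := fun l ↦ (hP l).mem_wheelSubmodule hk ht hn
  let Q : {l : Fin n → ℕ // HallLittlewood.IsAdmissible k l} → MvPolynomial (Fin n) ℂ :=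
    fun l ↦ P l.1
  have hne : ∀ l, Q l ≠ 0 := fun l ↦ l.2.hallLittlewood_ne_zero ht (hP l.1)
  have hdegree : ∀ l, MonomialOrder.lex.degree (Q l) = Finsupp.equivFunOnFinite.symm l.1 :=
    fun l ↦ l.2.lex_degree_hallLittlewood ht (hP l.1)
  have hinj : Function.Injective fun l ↦ MonomialOrder.lex.degree (Q l) := by
    simp only [hdegree]
    exact Finsupp.equivFunOnFinite.symm.injective.comp Subtype.val_injective
  refine ⟨Q, fun l ↦ hP l.1, fun l ↦ hmem l.1,
    HallLittlewood.linearIndependent_of_injective_degree hne hinj,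
    Eq.trans (le_antisymm ?_ ?_) (HallLittlewood.wheelSubmodule k n t).span_eq.symm⟩
  · exact Submodule.span_le.2 (Set.range_subset_iff.2 fun l ↦ hmem l.1)
  · refine HallLittlewood.le_span_range_of_forall_exists_degree_eq (m := MonomialOrder.lex)
      (fun l ↦ hmem l.1) hne fun f hf hf₀ ↦ ?_
    have hadm := HallLittlewood.isAdmissible_lex_degree (ht.ne_zero k.succ_ne_zero) hf hf₀
    exact ⟨⟨_, hadm⟩, (hdegree _).trans (Finsupp.equivFunOnFinite_symm_coe _)⟩
end

section
/- For every m ≥ 0 and every n ≥ k+1, the dimension of the space of polynomials in F_n^{(k,2)} that are homogeneous of degree m equals the number of admissible partitions λ ∈ π_n of weight |λ| = m. Equivalently, the character Σ_{n,m} dim(F_{n,m}^{(k,2)}) z^n v^m equals the product ∏_{s=0}^∞ (1 + v^s z + v^{2s} z² + … + v^{ks} z^k) = ∏_{s=0}^∞ (1 − (v^s z)^{k+1})/(1 − v^s z) as a formal power series in z and v. -/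
open MvPolynomial

/-!
Write `E(x) = e₀ + e₁ x + ⋯ + e_m x ^ m`. Symmetric polynomials in `n` variables of degree at most
`m` in each of them are the functions `f(y) = L(E(y₁) ⋯ E(y_n))`, where `L` is a linear functional
on the polynomials of degree `n` in `e₀, …, e_m`. Such an `f` satisfies the wheel condition if and
only if `L` vanishes on the degree `n` part of the ideal generated by the coefficients of
`G(x) = E(x) E(t x) ⋯ E(t ^ k x)`. Since `G(t x) = G(x)`, only the coefficients `g_s` of
`x ^ ((k + 1) s)` survive, and for a strictly concave weight on the indices the leading monomial of
`g_s` is `e_s ^ (k + 1)`. Hence the products `∏ g_s ^ (a_s / (k + 1)) * e_s ^ (a_s % (k + 1))` form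
a basis triangular to the monomials `e ^ a`, and those with some `a_s > k` span the ideal. The
functionals killing the ideal are therefore counted by the exponents with all `a_s ≤ k`, which are
the multiplicity vectors of the admissible partitions.
-/

namespace WheelCondition

section LinearAlgebra

variable {K V W ι : Type*} [Field K] [AddCommGroup V] [Module K V] [AddCommGroup W] [Module K W]

lemma linearIndependent_of_triangular {α : Type*} [LinearOrder α] (b : Module.Basis ι K V)
    {v : ι → V} (μ : ι → α) (hdiag : ∀ i, b.repr (v i) i ≠ 0)
    (hoff : ∀ i j, b.repr (v i) j ≠ 0 → j ≠ i → μ j < μ i) : LinearIndependent K v := by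
  rw [linearIndependent_iff]
  intro c hc
  by_contra hne
  obtain ⟨i, hi, hmax⟩ :=
    c.support.exists_max_image μ (Finsupp.support_nonempty_iff.2 hne)
  have hcoord : b.repr (Finsupp.linearCombination K v c) i = c i * b.repr (v i) i := by
    rw [Finsupp.linearCombination_apply, Finsupp.sum, map_sum, Finsupp.finsetSum_apply,
      Finset.sum_eq_single_of_mem i hi]
    · simp
    · intro j hj hji
      have hzero : b.repr (v j) i = 0 := by
        by_contra h
        exact (hoff j i h hji.symm).not_ge (hmax j hj)
      simp [hzero]
  rw [hc, map_zero, Finsupp.zero_apply] at hcoord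
  exact mul_ne_zero (Finsupp.mem_support_iff.1 hi) (hdiag i) hcoord.symm

lemma span_range_eq_top_of_triangular {α : Type*} [Preorder α] [WellFoundedLT α]
    (b : Module.Basis ι K V) {v : ι → V} (μ : ι → α) (hdiag : ∀ i, b.repr (v i) i ≠ 0)
    (hoff : ∀ i j, b.repr (v i) j ≠ 0 → j ≠ i → μ j < μ i) :
    Submodule.span K (Set.range v) = ⊤ := by
  have hb : ∀ i, b i ∈ Submodule.span K (Set.range v) := by
    intro i
    induction i using (InvImage.wf μ wellFounded_lt).induction with
    | _ i ih =>
    classical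
    have hi : i ∈ (b.repr (v i)).support := Finsupp.mem_support_iff.2 (hdiag i)
    have hsplit : b.repr (v i) i • b i
        = v i - ∑ j ∈ (b.repr (v i)).support.erase i, b.repr (v i) j • b j := by
      rw [eq_sub_iff_add_eq, Finset.add_sum_erase _ (fun j => b.repr (v i) j • b j) hi]
      exact b.linearCombination_repr (v i)
    rw [← Submodule.smul_mem_iff _ (hdiag i), hsplit]
    refine Submodule.sub_mem _ (Submodule.subset_span ⟨i, rfl⟩) (Submodule.sum_mem _ ?_)
    intro j hj
    obtain ⟨hji, hj⟩ := Finset.mem_erase.1 hj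
    exact Submodule.smul_mem _ _ (ih j (hoff i j (Finsupp.mem_support_iff.1 hj) hji))
  rw [eq_top_iff, ← b.span_eq, Submodule.span_le]
  rintro _ ⟨i, rfl⟩
  exact hb i

/-- The basis given by a family `v` that is triangular, with respect to the grading `μ` of the index
set, to a given basis `b`. -/
noncomputable def triangularBasis {α : Type*} [LinearOrder α] [WellFoundedLT α]
    (b : Module.Basis ι K V) (v : ι → V) (μ : ι → α) (hdiag : ∀ i, b.repr (v i) i ≠ 0)
    (hoff : ∀ i j, b.repr (v i) j ≠ 0 → j ≠ i → μ j < μ i) : Module.Basis ι K V :=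
  Module.Basis.mk (linearIndependent_of_triangular b μ hdiag hoff)
    (span_range_eq_top_of_triangular b μ hdiag hoff).ge

lemma triangularBasis_apply {α : Type*} [LinearOrder α] [WellFoundedLT α]
    (b : Module.Basis ι K V) (v : ι → V) (μ : ι → α) (hdiag : ∀ i, b.repr (v i) i ≠ 0)
    (hoff : ∀ i j, b.repr (v i) j ≠ 0 → j ≠ i → μ j < μ i) (i : ι) :
    triangularBasis b v μ hdiag hoff i = v i :=
  Module.Basis.mk_apply ..

/-- In coordinates with respect to `B`, the map `Φ` is the restriction of functionals to `D`, and
`F` consists of those vanishing on `D \ A`. -/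
lemma finrank_eq_card_of_mem_iff_dual (B : Module.Basis ι K V) (Φ : Module.Dual K V →ₗ[K] W)
    {D A : Set ι} [Finite A] (hAD : A ⊆ D) (hker : ∀ L, Φ L = 0 ↔ ∀ a ∈ D, L (B a) = 0)
    {F : Submodule K W} (hF : F ≤ LinearMap.range Φ)
    (hmem : ∀ L, Φ L ∈ F ↔ ∀ a ∈ D, a ∉ A → L (B a) = 0) :
    Module.finrank K F = Nat.card A := by
  let Ψ : (A → K) →ₗ[K] W :=
    Φ ∘ₗ (B.constr K).toLinearMap ∘ₗ Function.ExtendByZero.linearMap K ((↑) : A → ι)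
  have hΨ : ∀ u, Ψ u = Φ (B.constr K (Function.extend (↑) u 0)) := fun _ => rfl
  have hΨ_injective : Function.Injective Ψ := by
    rw [injective_iff_map_eq_zero]
    intro u hu
    funext a
    have ha := (hker _).1 ((hΨ u).symm.trans hu) a (hAD a.2)
    rwa [B.constr_basis, Subtype.val_injective.extend_apply] at ha
  have hΨ_range : LinearMap.range Ψ = F := by
    apply le_antisymm
    · rintro _ ⟨u, rfl⟩
      rw [hΨ, hmem]
      intro a _ haA
      rw [B.constr_basis, Function.extend_apply' _ _ _ (by simpa using haA), Pi.zero_apply]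
    · intro f hf
      obtain ⟨L, rfl⟩ := hF hf
      refine ⟨fun a => L (B a), ?_⟩
      rw [hΨ, ← sub_eq_zero, ← map_sub, hker]
      intro a haD
      rw [LinearMap.sub_apply, B.constr_basis, sub_eq_zero]
      by_cases haA : a ∈ A
      · exact Subtype.val_injective.extend_apply (fun a : A => L (B a)) 0 ⟨a, haA⟩
      · rw [Function.extend_apply' _ _ _ (by simpa using haA), Pi.zero_apply,
          (hmem L).1 hf a haD haA]
  have := Fintype.ofFinite A
  rw [← hΨ_range, LinearMap.finrank_range_of_inj hΨ_injective, Module.finrank_fintype_fun_eq_card,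
    Nat.card_eq_fintype_card]

lemma span_range_eval_algebraMap [Infinite K] {A : Type*} [CommRing A] [Algebra K A]
    (P : Polynomial A) :
    Submodule.span K (Set.range fun x : K => P.eval (algebraMap K A x)) =
      Submodule.span K (Set.range P.coeff) := by
  have heval : ∀ x : K, P.eval (algebraMap K A x) =
      ∑ i ∈ Finset.range (P.natDegree + 1), x ^ i • P.coeff i := by
    intro x
    simp only [Polynomial.eval_eq_sum_range, Algebra.smul_def, map_pow, mul_comm]
  apply le_antisymm <;> rw [Submodule.span_le]
  · rintro _ ⟨x, rfl⟩
    simp only [heval]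
    exact Submodule.sum_mem _ fun i _ =>
      Submodule.smul_mem _ _ (Submodule.subset_span ⟨i, rfl⟩)
  · rintro _ ⟨i, rfl⟩
    by_contra hi
    obtain ⟨L, hLi, hL⟩ := Submodule.exists_le_ker_of_notMem hi
    have hzero : ∑ j ∈ Finset.range (P.natDegree + 1),
        Polynomial.monomial j (L (P.coeff j)) = 0 := by
      refine Polynomial.funext fun x => ?_
      have hx : L (P.eval (algebraMap K A x)) = 0 := hL (Submodule.subset_span ⟨x, rfl⟩)
      simpa [heval, Polynomial.eval_finsetSum, mul_comm] using hx
    have hle : i ≤ P.natDegree :=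
      Polynomial.le_natDegree_of_ne_zero fun h => hLi (by rw [h, map_zero])
    have hcoeff := congrArg (fun p => Polynomial.coeff p i) hzero
    exact hLi (by simpa [Polynomial.finsetSum_coeff, Polynomial.coeff_monomial, hle] using hcoeff)

end LinearAlgebra

section LeadingExponent

variable {σ K M : Type*} [CommSemiring K] [AddCommMonoid M] [PartialOrder M]

/-- `p` has a unique monomial of maximal `w`-weight, and `a` is its exponent. Weights do not
separate monomials, so this is not a monomial order. -/
def IsLeadingExponent (w : σ → M) (p : MvPolynomial σ K) (a : σ →₀ ℕ) : Prop :=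
  coeff a p ≠ 0 ∧ ∀ b ∈ p.support, b ≠ a → Finsupp.weight w b < Finsupp.weight w a

namespace IsLeadingExponent

variable {w : σ → M}

lemma monomial [Nontrivial K] (a : σ →₀ ℕ) :
    IsLeadingExponent w (MvPolynomial.monomial a (1 : K)) a := by
  classical
  refine ⟨by simp, fun b hb hba => absurd ?_ hba⟩
  simpa using support_monomial_subset hb

lemma sum_monomial {ι : Type*} {S : Finset ι} {e : ι → σ →₀ ℕ} {c : ι → K} {i : ι} (hi : i ∈ S)
    (hc : c i ≠ 0)
    (hlt : ∀ j ∈ S, j ≠ i → Finsupp.weight w (e j) < Finsupp.weight w (e i)) :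
    IsLeadingExponent w (∑ j ∈ S, MvPolynomial.monomial (e j) (c j)) (e i) := by
  classical
  constructor
  · rw [coeff_sum, Finset.sum_eq_single_of_mem i hi, coeff_monomial, if_pos rfl]
    · exact hc
    · intro j hj hji
      rw [coeff_monomial, if_neg fun h => (hlt j hj hji).ne (by rw [h])]
  · intro b hb hne
    obtain ⟨j, hj, hbj⟩ := Finset.mem_biUnion.1 (support_sum hb)
    obtain rfl : b = e j := by simpa using support_monomial_subset hbj
    exact hlt j hj fun h => hne (by rw [h])

variable {p p' : MvPolynomial σ K} {a a' : σ →₀ ℕ}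

lemma weight_le (h : IsLeadingExponent w p a) {b : σ →₀ ℕ} (hb : b ∈ p.support) :
    Finsupp.weight w b ≤ Finsupp.weight w a := by
  rcases eq_or_ne b a with rfl | hba
  · exact le_rfl
  · exact (h.2 b hb hba).le

variable [IsOrderedCancelAddMonoid M]

lemma weight_add_lt (h : IsLeadingExponent w p a) (h' : IsLeadingExponent w p' a')
    {b b' : σ →₀ ℕ} (hb : b ∈ p.support) (hb' : b' ∈ p'.support) (hne : ¬(b = a ∧ b' = a')) :
    Finsupp.weight w (b + b') < Finsupp.weight w (a + a') := by
  rw [map_add, map_add]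
  rcases not_and_or.1 hne with hba | hba'
  · exact add_lt_add_of_lt_of_le (h.2 b hb hba) (h'.weight_le hb')
  · exact add_lt_add_of_le_of_lt (h.weight_le hb) (h'.2 b' hb' hba')

lemma mul [NoZeroDivisors K] (h : IsLeadingExponent w p a) (h' : IsLeadingExponent w p' a') :
    IsLeadingExponent w (p * p') (a + a') := by
  classical
  constructor
  · have huniq : UniqueAdd p.support p'.support a a' := by
      intro b b' hb hb' hsum
      by_contra hne
      exact (h.weight_add_lt h' hb hb' hne).ne (by rw [hsum])
    have hcoeff : coeff (a + a') (p * p') = coeff a p * coeff a' p' :=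
      AddMonoidAlgebra.coeff_mul_add_of_uniqueAdd huniq
    rw [hcoeff]
    exact mul_ne_zero h.1 h'.1
  · intro c hc hne
    obtain ⟨b, hb, b', hb', rfl⟩ := Finset.mem_add.1 (support_mul p p' hc)
    exact h.weight_add_lt h' hb hb' fun ⟨hba, hba'⟩ => hne (by rw [hba, hba'])

lemma pow [NoZeroDivisors K] [Nontrivial K] (h : IsLeadingExponent w p a) (r : ℕ) :
    IsLeadingExponent w (p ^ r) (r • a) := by
  induction r with
  | zero => simpa using monomial (K := K) (w := w) (0 : σ →₀ ℕ)
  | succ r ih => simpa only [pow_succ, succ_nsmul] using ih.mul h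

lemma prod [NoZeroDivisors K] [Nontrivial K] {ι : Type*} (s : Finset ι)
    {f : ι → MvPolynomial σ K} {e : ι → σ →₀ ℕ} (h : ∀ i ∈ s, IsLeadingExponent w (f i) (e i)) :
    IsLeadingExponent w (∏ i ∈ s, f i) (∑ i ∈ s, e i) := by
  classical
  induction s using Finset.induction_on with
  | empty => simpa using monomial (K := K) (w := w) (0 : σ →₀ ℕ)
  | insert i s hi ih =>
    rw [Finset.prod_insert hi, Finset.sum_insert hi]
    exact (h i (s.mem_insert_self i)).mul (ih fun j hj => h j (Finset.mem_insert_of_mem hj))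

end IsLeadingExponent

end LeadingExponent

section WeightedHomogeneous

variable {σ K M : Type*} [CommSemiring K] [AddCommMonoid M]

lemma weightedHomogeneousSubmodule_eq_span_image {w : σ → M}
    {B : Module.Basis (σ →₀ ℕ) K (MvPolynomial σ K)}
    (hB : ∀ a, IsWeightedHomogeneous w (B a) (Finsupp.weight w a)) (m : M) :
    weightedHomogeneousSubmodule K w m =
      Submodule.span K (B '' {a | Finsupp.weight w a = m}) := by
  classical
  apply le_antisymm
  · intro p hp
    rw [← (show IsWeightedHomogeneous w p m from hp).weightedHomogeneousComponent_same,
      ← B.linearCombination_repr p, Finsupp.linearCombination_apply, Finsupp.sum, map_sum]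
    refine Submodule.sum_mem _ fun a _ => ?_
    rw [map_smul, weightedHomogeneousComponent_of_mem (hB a)]
    refine Submodule.smul_mem _ _ ?_
    split_ifs with ha
    · exact Submodule.subset_span ⟨a, ha.symm, rfl⟩
    · exact Submodule.zero_mem _
  · rw [Submodule.span_le]
    rintro _ ⟨a, rfl, rfl⟩
    exact hB a

lemma forall_dual_basis_eq_zero_iff_le_ker {w : σ → M}
    {B : Module.Basis (σ →₀ ℕ) K (MvPolynomial σ K)}
    (hB : ∀ a, IsWeightedHomogeneous w (B a) (Finsupp.weight w a)) (S : Set M)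
    (L : Module.Dual K (MvPolynomial σ K)) :
    (∀ a, Finsupp.weight w a ∈ S → L (B a) = 0) ↔
      ∀ m ∈ S, weightedHomogeneousSubmodule K w m ≤ LinearMap.ker L := by
  simp only [weightedHomogeneousSubmodule_eq_span_image hB, Submodule.span_le, Set.image_subset_iff]
  exact ⟨fun h m hm a ha => h a (ha.symm ▸ hm), fun h a ha => h _ ha rfl⟩

end WeightedHomogeneous

lemma weight_one {σ : Type*} (a : σ →₀ ℕ) : Finsupp.weight (1 : σ → ℕ) a = a.degree := by
  rw [Finsupp.degree_eq_weight_one]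
  rfl

section DivModProduct

variable {σ K : Type*} [Fintype σ] [Field K]

/-- The monomial `∏ s, X s ^ a s` with as many factors `X s ^ q` as possible replaced by `g s`. -/
noncomputable def divModProduct (g : σ → MvPolynomial σ K) (q : ℕ) (a : σ →₀ ℕ) :
    MvPolynomial σ K :=
  ∏ s, g s ^ (a s / q) * X s ^ (a s % q)

variable {g : σ → MvPolynomial σ K} {q : ℕ}

lemma sum_div_smul_single_add_mod_smul_single (q : ℕ) (a : σ →₀ ℕ) :
    ∑ s, ((a s / q) • Finsupp.single s q + (a s % q) • Finsupp.single s 1) = a := by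
  have hs : ∀ s, (a s / q) • Finsupp.single s q + (a s % q) • Finsupp.single s 1
      = Finsupp.single s (a s) := by
    intro s
    rw [Finsupp.smul_single, Finsupp.smul_single, ← Finsupp.single_add, smul_eq_mul, smul_eq_mul,
      mul_one, Nat.div_add_mod']
  simp only [hs, Finsupp.univ_sum_single]

lemma isLeadingExponent_divModProduct {M : Type*} [AddCommMonoid M] [PartialOrder M]
    [IsOrderedCancelAddMonoid M] {w : σ → M}
    (hg : ∀ s, IsLeadingExponent w (g s) (Finsupp.single s q)) (a : σ →₀ ℕ) :
    IsLeadingExponent w (divModProduct g q a) a := by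
  have h := IsLeadingExponent.prod Finset.univ fun s _ =>
    ((hg s).pow (a s / q)).mul ((IsLeadingExponent.monomial (Finsupp.single s 1)).pow (a s % q))
  rwa [sum_div_smul_single_add_mod_smul_single] at h

lemma isWeightedHomogeneous_divModProduct {M : Type*} [AddCommMonoid M] {w : σ → M}
    (hg : ∀ s, IsWeightedHomogeneous w (g s) (q • w s)) (a : σ →₀ ℕ) :
    IsWeightedHomogeneous w (divModProduct g q a) (Finsupp.weight w a) := by
  have h := IsWeightedHomogeneous.prod Finset.univ _ _ fun s _ =>
    ((hg s).pow (a s / q)).mul ((isWeightedHomogeneous_X K w s).pow (a s % q))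
  convert! h using 1
  rw [Finsupp.weight_eq_sum]
  refine Finset.sum_congr rfl fun s _ => ?_
  rw [smul_smul, ← add_smul, Nat.div_add_mod']

lemma mul_divModProduct (hq : 0 < q) (s : σ) (a : σ →₀ ℕ) :
    g s * divModProduct g q a = divModProduct g q (a + Finsupp.single s q) := by
  classical
  have hoff : ∀ i ∈ Finset.univ.erase s, (a + Finsupp.single s q) i = a i := by
    intro i hi
    simp [Finset.ne_of_mem_erase hi]
  simp only [divModProduct]
  rw [← Finset.mul_prod_erase _ _ (Finset.mem_univ s),
    ← Finset.mul_prod_erase _ (fun i => g i ^ ((a + Finsupp.single s q) i / q) * _)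
      (Finset.mem_univ s), ← mul_assoc]
  congr 1
  · rw [Finsupp.add_apply, Finsupp.single_eq_same, Nat.add_mod_right, Nat.add_div_right _ hq,
      pow_succ', mul_assoc]
  · exact Finset.prod_congr rfl fun i hi => by rw [hoff i hi]

variable {M : Type*} [AddCommMonoid M] [LinearOrder M] [IsOrderedCancelAddMonoid M]
  [WellFoundedLT M] {w : σ → M} (hg : ∀ s, IsLeadingExponent w (g s) (Finsupp.single s q))

/-- The products `divModProduct g q a` as a basis of the polynomial ring, when the leading monomial
of `g s` is `X s ^ q`. -/
noncomputable def divModBasis : Module.Basis (σ →₀ ℕ) K (MvPolynomial σ K) :=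
  triangularBasis (basisMonomials σ K) (divModProduct g q) (Finsupp.weight w)
    (fun a => (isLeadingExponent_divModProduct hg a).1)
    fun a b hb hne => (isLeadingExponent_divModProduct hg a).2 b (mem_support_iff.2 hb) hne

lemma divModBasis_apply (a : σ →₀ ℕ) : divModBasis hg a = divModProduct g q a :=
  triangularBasis_apply ..

open Pointwise in
lemma range_mul_divModProduct_image (hq : 0 < q) (r : ℕ) :
    Set.range g * divModProduct g q '' {a | a.degree = r} =
      divModProduct g q '' {a | a.degree = q + r ∧ ∃ s, q ≤ a s} := by
  ext p
  constructor
  · rintro ⟨_, ⟨s, rfl⟩, _, ⟨a, rfl, rfl⟩, rfl⟩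
    refine ⟨a + Finsupp.single s q, ⟨?_, s, by simp⟩, (mul_divModProduct hq s a).symm⟩
    rw [map_add, Finsupp.degree_single, add_comm]
  · rintro ⟨a, ⟨hdeg, s, hs⟩, rfl⟩
    have ha : a - Finsupp.single s q + Finsupp.single s q = a :=
      tsub_add_cancel_of_le (Finsupp.single_le_iff.2 hs)
    refine ⟨g s, ⟨s, rfl⟩, _, ⟨a - Finsupp.single s q, ?_, rfl⟩, ?_⟩
    · have h := congrArg Finsupp.degree ha
      rw [map_add, Finsupp.degree_single, hdeg, add_comm] at h
      exact Nat.add_left_cancel h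
    · simp only [mul_divModProduct hq, ha]

lemma span_range_mul_homogeneousSubmodule (hq : 0 < q) (hhom : ∀ s, (g s).IsHomogeneous q)
    (r : ℕ) :
    Submodule.span K (Set.range g) * homogeneousSubmodule σ K r =
      Submodule.span K (divModBasis hg '' {a | a.degree = q + r ∧ ∃ s, q ≤ a s}) := by
  have hweight : ∀ s, IsWeightedHomogeneous 1 (g s) (q • (1 : σ → ℕ) s) := by
    intro s
    rw [Pi.one_apply, smul_eq_mul, mul_one]
    exact hhom s
  have hB : ∀ a, IsWeightedHomogeneous (1 : σ → ℕ) (divModBasis hg a) (Finsupp.weight 1 a) := by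
    intro a
    rw [divModBasis_apply]
    exact isWeightedHomogeneous_divModProduct hweight a
  have himage : ∀ S, divModBasis hg '' S = divModProduct g q '' S := fun S =>
    Set.image_congr fun a _ => divModBasis_apply hg a
  have hspan := weightedHomogeneousSubmodule_eq_span_image hB r
  rw [weightedHomogeneousSubmodule_one] at hspan
  simp only [weight_one] at hspan
  rw [hspan, Submodule.span_mul_span, himage, himage, range_mul_divModProduct_image hq]

end DivModProduct

section TupleContent

variable {τ ι : Type*} [Fintype ι]

/-- The content of a tuple `b`: the number of occurrences of each value. -/
noncomputable def content (b : ι → τ) : τ →₀ ℕ := ∑ j, Finsupp.single (b j) 1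

lemma weight_content {M : Type*} [AddCommMonoid M] (w : τ → M) (b : ι → τ) :
    Finsupp.weight w (content b) = ∑ j, w (b j) := by
  simp [content, Finsupp.weight_single]

lemma degree_content (b : ι → τ) : (content b).degree = Fintype.card ι := by
  simp [content]

lemma content_const (s : τ) :
    content (fun _ : ι => s) = Finsupp.single s (Fintype.card ι) := by
  simp [content]

lemma content_apply [DecidableEq τ] (b : ι → τ) (s : τ) :
    content b s = (Finset.univ.filter fun j => b j = s).card := by
  simp [content, Finsupp.finsetSum_apply, Finsupp.single_apply]

lemma content_comp_perm (b : ι → τ) (π : Equiv.Perm ι) : content (b ∘ π) = content b :=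
  Equiv.sum_comp π fun j => Finsupp.single (b j) 1

lemma exists_perm_of_content_eq {b b' : ι → τ} (h : content b = content b') :
    ∃ π : Equiv.Perm ι, b = b' ∘ π := by
  classical
  have hcard : ∀ s, Fintype.card {j // b j = s} = Fintype.card {j // b' j = s} := by
    intro s
    simpa only [content_apply, ← Fintype.card_subtype] using DFunLike.congr_fun h s
  let e := fun s => Fintype.equivOfCardEq (hcard s)
  exact ⟨Equiv.ofFiberEquiv e, funext fun j => (Equiv.ofFiberEquiv_map e j).symm⟩

lemma exists_content_eq {n : ℕ} {a : τ →₀ ℕ} (ha : a.degree = n) :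
    ∃ b : Fin n → τ, content b = a := by
  induction n generalizing a with
  | zero => exact ⟨Fin.elim0, ((Finsupp.degree_eq_zero_iff a).1 ha).symm ▸ rfl⟩
  | succ n ih =>
    obtain ⟨s, hs⟩ : ∃ s, a s ≠ 0 := by
      by_contra! h
      have hzero : a = 0 := Finsupp.ext h
      rw [hzero, map_zero] at ha
      exact n.succ_ne_zero ha.symm
    have hsplit : Finsupp.single s 1 + (a - Finsupp.single s 1) = a :=
      add_tsub_cancel_of_le (Finsupp.single_le_iff.2 (Nat.one_le_iff_ne_zero.2 hs))
    have hdeg : (a - Finsupp.single s 1).degree = n := by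
      have h := congrArg Finsupp.degree hsplit
      rw [map_add, Finsupp.degree_single, ha, add_comm] at h
      exact Nat.add_right_cancel h
    obtain ⟨b, hb⟩ := ih hdeg
    refine ⟨Fin.cons s b, ?_⟩
    simp only [content, Fin.sum_univ_succ, Fin.cons_zero, Fin.cons_succ] at hb ⊢
    rw [hb, hsplit]

lemma prod_X_eq_monomial_content {K : Type*} [CommSemiring K] (b : ι → τ) :
    ∏ j, (X (b j) : MvPolynomial τ K) = monomial (content b) 1 := by
  rw [content, monomial_sum_one]
  rfl

end TupleContent

section RotationProduct

variable {A : Type*} [CommRing A]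

/-- The product `P(x) P(t x) ⋯ P(t ^ (q - 1) x)` of the first `q` rescalings of `P`, which is the
norm of `P` to the polynomials in `x ^ q` when `t` is a primitive `q`-th root of unity. -/
noncomputable def rotationProduct (P : Polynomial A) (t : A) (q : ℕ) : Polynomial A :=
  ∏ j ∈ Finset.range q, P.comp (Polynomial.C (t ^ j) * Polynomial.X)

variable (P : Polynomial A) {t : A} {q : ℕ}

lemma rotationProduct_comp_C_mul_X (ht : t ^ q = 1) :
    (rotationProduct P t q).comp (Polynomial.C t * Polynomial.X) = rotationProduct P t q := by
  let f : ℕ → Polynomial A := fun j => P.comp (Polynomial.C (t ^ j) * Polynomial.X)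
  have hshift : ∀ j, (f j).comp (Polynomial.C t * Polynomial.X) = f (j + 1) := by
    intro j
    simp only [f, Polynomial.comp_assoc, Polynomial.mul_comp, Polynomial.C_comp,
      Polynomial.X_comp, ← mul_assoc, ← Polynomial.C_mul, pow_succ]
  have hperiod : f q = f 0 := by simp only [f, ht, pow_zero]
  cases q with
  | zero => simp [rotationProduct]
  | succ q =>
    change (∏ j ∈ Finset.range (q + 1), f j).comp _ = ∏ j ∈ Finset.range (q + 1), f j
    rw [Polynomial.prod_comp, Finset.prod_congr rfl fun j _ => hshift j, Finset.prod_range_succ,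
      hperiod, Finset.prod_range_succ']

lemma coeff_rotationProduct_eq_zero [IsDomain A] (ht : IsPrimitiveRoot t q) {d : ℕ}
    (hd : ¬q ∣ d) : (rotationProduct P t q).coeff d = 0 := by
  have h := congrArg (fun p => p.coeff d) (rotationProduct_comp_C_mul_X P ht.pow_eq_one)
  simp only [Polynomial.comp_C_mul_X_coeff] at h
  by_contra hne
  exact hd (ht.dvd_of_pow_eq_one d (mul_left_cancel₀ hne (h.trans (mul_one _).symm)))

lemma span_range_coeff_rotationProduct {K : Type*} [CommSemiring K] [Algebra K A] [IsDomain A]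
    (ht : IsPrimitiveRoot t q) :
    Submodule.span K (Set.range (rotationProduct P t q).coeff) =
      Submodule.span K (Set.range fun s => (rotationProduct P t q).coeff (q * s)) := by
  apply le_antisymm
  · rw [Submodule.span_le]
    rintro _ ⟨d, rfl⟩
    by_cases hd : q ∣ d
    · obtain ⟨s, rfl⟩ := hd
      exact Submodule.subset_span ⟨s, rfl⟩
    · rw [coeff_rotationProduct_eq_zero P ht hd]
      exact Submodule.zero_mem _
  · exact Submodule.span_mono (Set.range_comp_subset_range (q * ·) _)

end RotationProduct

section GenericPolynomial

variable (K : Type*) [Field K] (N : ℕ)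

/-- The generic polynomial `e₀ + e₁ x + ⋯ + e_N x ^ N`, whose coefficients are the variables
`e i = X i`. -/
noncomputable def genericPoly : Polynomial (MvPolynomial (Fin (N + 1)) K) :=
  ∑ i : Fin (N + 1), Polynomial.monomial i (X i)

variable {K N}

lemma coeff_genericPoly (i : Fin (N + 1)) : (genericPoly K N).coeff i = X i := by
  simp [genericPoly, Polynomial.finsetSum_coeff, Polynomial.coeff_monomial, Fin.val_inj]

lemma coeff_genericPoly_eq_zero {d : ℕ} (hd : N < d) : (genericPoly K N).coeff d = 0 := by
  rw [genericPoly, Polynomial.finsetSum_coeff]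
  exact Finset.sum_eq_zero fun i _ => Polynomial.coeff_monomial_of_ne _ (by omega)

lemma span_range_coeff_genericPoly :
    Submodule.span K (Set.range (genericPoly K N).coeff) =
      homogeneousSubmodule (Fin (N + 1)) K 1 := by
  rw [homogeneousSubmodule_one_eq_span_X]
  apply le_antisymm <;> rw [Submodule.span_le]
  · rintro _ ⟨d, rfl⟩
    rcases lt_or_ge N d with hd | hd
    · rw [coeff_genericPoly_eq_zero hd]
      exact Submodule.zero_mem _
    · have hcoeff := coeff_genericPoly (K := K) (⟨d, by omega⟩ : Fin (N + 1))
      exact Submodule.subset_span ⟨_, hcoeff.symm⟩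
  · rintro _ ⟨i, rfl⟩
    exact Submodule.subset_span ⟨i, coeff_genericPoly i⟩

lemma prod_eval_genericPoly {ι : Type*} [Fintype ι] [DecidableEq ι] (y : ι → K) :
    ∏ j, (genericPoly K N).eval (C (y j)) =
      ∑ b : ι → Fin (N + 1), monomial (content b) (∏ j, y j ^ (b j : ℕ)) := by
  simp only [genericPoly, Polynomial.eval_finsetSum, Polynomial.eval_monomial, Fintype.prod_sum]
  refine Finset.sum_congr rfl fun b _ => ?_
  rw [Finset.prod_mul_distrib, prod_X_eq_monomial_content, mul_comm]
  simp only [← map_pow, ← map_prod]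
  rw [C_mul_monomial, mul_one]

lemma rotationProduct_genericPoly (t : K) (q : ℕ) :
    rotationProduct (genericPoly K N) (C t) q = ∑ b : Fin q → Fin (N + 1),
      Polynomial.monomial (∑ j, (b j : ℕ))
        (monomial (content b) (∏ j : Fin q, (t ^ (j : ℕ)) ^ (b j : ℕ))) := by
  have hfactor : ∀ j : ℕ, (genericPoly K N).comp (Polynomial.C (C t ^ j) * Polynomial.X) =
      ∑ i : Fin (N + 1), Polynomial.C (C ((t ^ j) ^ (i : ℕ)) * X i) * Polynomial.X ^ (i : ℕ) := by
    intro j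
    simp only [genericPoly, Polynomial.sum_comp, Polynomial.monomial_comp, mul_pow, map_mul,
      map_pow]
    exact Finset.sum_congr rfl fun i _ => by ring
  simp only [rotationProduct, Finset.prod_range, hfactor, Fintype.prod_sum]
  refine Finset.sum_congr rfl fun b _ => ?_
  rw [Finset.prod_mul_distrib, Finset.prod_pow_eq_pow_sum, ← map_prod, Finset.prod_mul_distrib,
    ← map_prod, prod_X_eq_monomial_content, C_mul_monomial, mul_one,
    Polynomial.C_mul_X_pow_eq_monomial]

/-- The coefficient of `x ^ (q * s)` in `E(x) E(t x) ⋯ E(t ^ (q - 1) x)`, where `E` is the generic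
polynomial. When `t` is a primitive `q`-th root of unity, all other coefficients vanish. -/
noncomputable def wheelCoeff (t : K) (q : ℕ) (s : Fin (N + 1)) : MvPolynomial (Fin (N + 1)) K :=
  (rotationProduct (genericPoly K N) (C t) q).coeff (q * s)

lemma coeff_rotationProduct_genericPoly (t : K) (q d : ℕ) :
    (rotationProduct (genericPoly K N) (C t) q).coeff d =
      ∑ b : Fin q → Fin (N + 1) with ∑ j, (b j : ℕ) = d,
        monomial (content b) (∏ j : Fin q, (t ^ (j : ℕ)) ^ (b j : ℕ)) := by
  simp only [rotationProduct_genericPoly, Polynomial.finsetSum_coeff, Polynomial.coeff_monomial,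
    Finset.sum_filter]

lemma coeff_rotationProduct_genericPoly_eq_zero (t : K) {q d : ℕ} (hd : q * N < d) :
    (rotationProduct (genericPoly K N) (C t) q).coeff d = 0 := by
  rw [coeff_rotationProduct_genericPoly, Finset.filter_false_of_mem, Finset.sum_empty]
  intro b _
  have hle : ∑ j, (b j : ℕ) ≤ q * N := by
    simpa using Finset.sum_le_card_nsmul Finset.univ (fun j => (b j : ℕ)) N fun j _ =>
      Nat.lt_succ_iff.1 (b j).2
  exact (hle.trans_lt hd).ne

lemma span_range_wheelCoeff {t : K} {q : ℕ} (hq : 0 < q) (ht : IsPrimitiveRoot t q) :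
    Submodule.span K (Set.range (wheelCoeff (N := N) t q)) =
      Submodule.span K (Set.range (rotationProduct (genericPoly K N) (C t) q).coeff) := by
  rw [span_range_coeff_rotationProduct _ (ht.map_of_injective (C_injective (Fin (N + 1)) K))]
  apply le_antisymm
  · refine Submodule.span_mono ?_
    rintro _ ⟨s, rfl⟩
    exact ⟨s, rfl⟩
  · rw [Submodule.span_le]
    rintro _ ⟨s, rfl⟩
    rcases lt_or_ge N s with hs | hs
    · simp only [coeff_rotationProduct_genericPoly_eq_zero t (Nat.mul_lt_mul_of_pos_left hs hq)]
      exact Submodule.zero_mem _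
    · exact Submodule.subset_span ⟨⟨s, Nat.lt_succ_iff.2 hs⟩, rfl⟩

/-- The weight `(1, i)` of the variable `e i`: the first component records the degree, the second
the sum of the indices. -/
def degreeIndexWeight (i : Fin (N + 1)) : ℕ × ℕ := (1, i)

lemma weight_degreeIndexWeight (a : Fin (N + 1) →₀ ℕ) :
    Finsupp.weight degreeIndexWeight a = (a.degree, Finsupp.weight Fin.val a) := by
  ext <;> simp [Finsupp.weight_eq_sum, Finsupp.degree_eq_sum, degreeIndexWeight, Prod.fst_sum,
    Prod.snd_sum]

lemma isWeightedHomogeneous_wheelCoeff (t : K) (q : ℕ) (s : Fin (N + 1)) :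
    IsWeightedHomogeneous degreeIndexWeight (wheelCoeff t q s) (q • degreeIndexWeight s) := by
  rw [wheelCoeff, coeff_rotationProduct_genericPoly]
  refine IsWeightedHomogeneous.sum _ _ _ fun b hb => isWeightedHomogeneous_monomial _ _ _ ?_
  rw [weight_degreeIndexWeight, degree_content, weight_content, Fintype.card_fin,
    (Finset.mem_filter.1 hb).2]
  simp [degreeIndexWeight]

lemma isHomogeneous_wheelCoeff (t : K) (q : ℕ) (s : Fin (N + 1)) :
    (wheelCoeff t q s).IsHomogeneous q := by
  rw [wheelCoeff, coeff_rotationProduct_genericPoly]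
  refine IsHomogeneous.sum _ _ _ fun b _ => isHomogeneous_monomial _ ?_
  rw [degree_content, Fintype.card_fin]

/-- A strictly concave weight on the indices `0, …, N`, namely `i ↦ i * (N - i)`. -/
def concaveWeight (i : Fin (N + 1)) : ℕ := i * i.rev

lemma sum_concaveWeight_lt {ι : Type*} [Fintype ι] {b : ι → Fin (N + 1)} {s : Fin (N + 1)}
    (hmean : ∑ j, (b j : ℕ) = Fintype.card ι * s) (hne : b ≠ fun _ => s) :
    ∑ j, concaveWeight (b j) < Fintype.card ι * concaveWeight s := by
  obtain ⟨j, hj⟩ := Function.ne_iff.1 hne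
  have hj : (b j : ℤ) - s ≠ 0 := sub_ne_zero.2 (by exact_mod_cast Fin.val_ne_of_ne hj)
  have hsq : 0 < ∑ j, ((b j : ℤ) - s) ^ 2 :=
    Finset.sum_pos' (fun j _ => sq_nonneg _)
      ⟨j, Finset.mem_univ j, by positivity⟩
  have hcast : ∀ i : Fin (N + 1), (concaveWeight i : ℤ) = i * (N - i) := by
    intro i
    rw [concaveWeight, Fin.val_rev, Nat.add_sub_add_right, Nat.cast_mul,
      Nat.cast_sub (Nat.lt_succ_iff.1 i.2)]
  -- Tangent line at `s`, whose linear term sums to zero.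
  have hexpand : ∀ j, (concaveWeight (b j) : ℤ) =
      concaveWeight s - ((b j : ℤ) - s) ^ 2 + (N - 2 * s) * (b j - s) := by
    intro j
    rw [hcast, hcast]
    ring
  have hmean' : ∑ j, ((b j : ℤ) - s) = 0 := by
    rw [Finset.sum_sub_distrib, ← Nat.cast_sum, hmean]
    simp
  zify
  simp only [hexpand, Finset.sum_add_distrib, Finset.sum_sub_distrib, ← Finset.mul_sum,
    hmean', Finset.sum_const, Finset.card_univ, nsmul_eq_mul]
  linarith

lemma isLeadingExponent_wheelCoeff {t : K} (ht : t ≠ 0) (q : ℕ) (s : Fin (N + 1)) :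
    IsLeadingExponent concaveWeight (wheelCoeff t q s) (Finsupp.single s q) := by
  rw [wheelCoeff, coeff_rotationProduct_genericPoly]
  have hconst : content (fun _ : Fin q => s) = Finsupp.single s q := by
    rw [content_const, Fintype.card_fin]
  rw [← hconst]
  refine IsLeadingExponent.sum_monomial (by simp) ?_ fun b hb hne => ?_
  · exact Finset.prod_ne_zero_iff.2 fun j _ => pow_ne_zero _ (pow_ne_zero _ ht)
  · rw [weight_content, weight_content, Finset.sum_const, Finset.card_univ, smul_eq_mul]
    refine sum_concaveWeight_lt ?_ hne
    rw [(Finset.mem_filter.1 hb).2, Fintype.card_fin]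

end GenericPolynomial

section SymmOfDual

variable {K : Type*} [Field K] {N n : ℕ}

/-- The exponent of the monomial `∏ j, x j ^ b j`. -/
noncomputable def tupleExponent (b : Fin n → Fin (N + 1)) : Fin n →₀ ℕ :=
  Finsupp.equivFunOnFinite.symm fun j => b j

lemma tupleExponent_injective : Function.Injective (tupleExponent (N := N) (n := n)) :=
  Finsupp.equivFunOnFinite.symm.injective.comp (Fin.val_injective.comp_left)

lemma exists_tupleExponent_eq {d : Fin n →₀ ℕ} (hd : ∀ j, d j ≤ N) :
    ∃ b : Fin n → Fin (N + 1), tupleExponent b = d :=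
  ⟨fun j => ⟨d j, Nat.lt_succ_iff.2 (hd j)⟩, Finsupp.ext fun _ => rfl⟩

lemma degree_tupleExponent (b : Fin n → Fin (N + 1)) :
    (tupleExponent b).degree = Finsupp.weight Fin.val (content b) := by
  rw [weight_content, Finsupp.degree_eq_sum]
  rfl

lemma coeff_tupleExponent_comp_perm {f : MvPolynomial (Fin n) K} (hf : f.IsSymmetric)
    (b : Fin n → Fin (N + 1)) (π : Equiv.Perm (Fin n)) :
    coeff (tupleExponent (b ∘ π)) f = coeff (tupleExponent b) f := by
  have hmap : (tupleExponent (b ∘ π)).mapDomain π = tupleExponent b := by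
    ext j
    rw [Finsupp.mapDomain_equiv_apply]
    simp [tupleExponent]
  rw [← hmap, ← coeff_rename_mapDomain π π.injective f, hf π]

/-- The polynomial `f` in `n` variables whose values are `f y = L (E (y 0) ⋯ E (y (n - 1)))`, where
`E` is the generic polynomial of degree `N`. This identifies the dual of the space of degree `n`
polynomials in the coefficients of `E` with the symmetric polynomials of degree at most `N` in each
of the `n` variables. -/
noncomputable def symmOfDual (n : ℕ) :
    Module.Dual K (MvPolynomial (Fin (N + 1)) K) →ₗ[K] MvPolynomial (Fin n) K where
  toFun L := ∑ b : Fin n → Fin (N + 1), monomial (tupleExponent b) (L (monomial (content b) 1))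
  map_add' L L' := by simp only [LinearMap.add_apply, map_add, Finset.sum_add_distrib]
  map_smul' c L := by
    simp only [LinearMap.smul_apply, ← smul_monomial, Finset.smul_sum, RingHom.id_apply]

lemma symmOfDual_apply (L : Module.Dual K (MvPolynomial (Fin (N + 1)) K)) :
    symmOfDual n L =
      ∑ b : Fin n → Fin (N + 1), monomial (tupleExponent b) (L (monomial (content b) 1)) :=
  rfl

variable (L : Module.Dual K (MvPolynomial (Fin (N + 1)) K))

lemma eval_symmOfDual (y : Fin n → K) :
    eval y (symmOfDual n L) = L (∏ j, (genericPoly K N).eval (C (y j))) := by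
  rw [prod_eval_genericPoly, map_sum, symmOfDual_apply, map_sum]
  refine Finset.sum_congr rfl fun b _ => ?_
  rw [eval_monomial, Finsupp.prod_fintype _ _ fun j => pow_zero _,
    ← mul_one (∏ j, y j ^ (b j : ℕ)), ← smul_eq_mul (∏ j, y j ^ (b j : ℕ)), ← smul_monomial,
    map_smul, smul_eq_mul, mul_comm]
  rfl

lemma coeff_symmOfDual (b : Fin n → Fin (N + 1)) :
    coeff (tupleExponent b) (symmOfDual n L) = L (monomial (content b) 1) := by
  simp [symmOfDual_apply, coeff_sum, coeff_monomial, tupleExponent_injective.eq_iff]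

lemma exists_tupleExponent_eq_of_mem_support {d : Fin n →₀ ℕ}
    (hd : d ∈ (symmOfDual n L).support) : ∃ b : Fin n → Fin (N + 1), tupleExponent b = d := by
  classical
  obtain ⟨b, -, hb⟩ := Finset.mem_biUnion.1 (support_sum hd)
  exact ⟨b, (Finset.mem_singleton.1 (support_monomial_subset hb)).symm⟩

lemma symmOfDual_eq_zero_iff :
    symmOfDual n L = 0 ↔ ∀ a : Fin (N + 1) →₀ ℕ, a.degree = n → L (monomial a 1) = 0 := by
  constructor
  · intro h a ha
    obtain ⟨b, rfl⟩ := exists_content_eq ha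
    rw [← coeff_symmOfDual, h, coeff_zero]
  · intro h
    rw [symmOfDual_apply]
    refine Finset.sum_eq_zero fun b _ => ?_
    rw [h _ ((degree_content b).trans (Fintype.card_fin n)), map_zero]

lemma isHomogeneous_symmOfDual_iff {m : ℕ} :
    (symmOfDual n L).IsHomogeneous m ↔ ∀ a : Fin (N + 1) →₀ ℕ,
      a.degree = n ∧ Finsupp.weight Fin.val a ≠ m → L (monomial a 1) = 0 := by
  constructor
  · rintro h a ⟨hdeg, hweight⟩
    obtain ⟨b, rfl⟩ := exists_content_eq hdeg
    rw [← coeff_symmOfDual]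
    exact h.coeff_eq_zero (by rwa [degree_tupleExponent])
  · intro h d hd
    obtain ⟨b, rfl⟩ := exists_tupleExponent_eq_of_mem_support L (mem_support_iff.2 hd)
    rw [coeff_symmOfDual] at hd
    rw [weight_one, degree_tupleExponent]
    by_contra hne
    exact hd (h _ ⟨(degree_content b).trans (Fintype.card_fin n), hne⟩)

lemma isSymmetric_symmOfDual [Infinite K] : (symmOfDual n L).IsSymmetric := by
  intro π
  refine MvPolynomial.funext fun y => ?_
  rw [eval_rename, eval_symmOfDual, eval_symmOfDual]
  exact congrArg L (Equiv.prod_comp π fun j => (genericPoly K N).eval (C (y j)))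

lemma exists_symmOfDual_eq {f : MvPolynomial (Fin n) K} (hf : f.IsSymmetric)
    (hdeg : ∀ d ∈ f.support, ∀ j, d j ≤ N) :
    ∃ L : Module.Dual K (MvPolynomial (Fin (N + 1)) K), symmOfDual n L = f := by
  obtain ⟨c, hc⟩ : ∃ c : (Fin (N + 1) →₀ ℕ) → K, ∀ b : Fin n → Fin (N + 1),
      c (content b) = coeff (tupleExponent b) f := by
    have hfactors : Function.FactorsThrough (fun b => coeff (tupleExponent b) f)
        (content : (Fin n → Fin (N + 1)) → _) := by
      intro b b' hbb'
      obtain ⟨π, rfl⟩ := exists_perm_of_content_eq hbb'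
      exact coeff_tupleExponent_comp_perm hf b' π
    exact ⟨_, hfactors.extend_apply 0⟩
  let L : Module.Dual K (MvPolynomial (Fin (N + 1)) K) :=
    (basisMonomials (Fin (N + 1)) K).constr K c
  have hL : ∀ b : Fin n → Fin (N + 1),
      coeff (tupleExponent b) (symmOfDual n L) = coeff (tupleExponent b) f := by
    intro b
    rw [coeff_symmOfDual, ← hc b]
    exact Module.Basis.constr_basis ..
  refine ⟨L, MvPolynomial.ext _ _ fun d => ?_⟩
  by_cases hd : ∃ b : Fin n → Fin (N + 1), tupleExponent b = d
  · obtain ⟨b, rfl⟩ := hd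
    exact hL b
  · rw [notMem_support_iff.1 fun h => hd (exists_tupleExponent_eq_of_mem_support L h),
      notMem_support_iff.1 fun h => hd (exists_tupleExponent_eq (hdeg d h))]

end SymmOfDual

section WheelSubmodule

variable {K : Type*} [Field K] {N : ℕ}

/-- The basis of `K[e₀, …, e_N]` formed by the products of powers of the wheel coefficients and of
the variables, the exponents of the latter being at most `k`. -/
noncomputable def wheelBasis {k : ℕ} {t : K} (ht : IsPrimitiveRoot t (k + 1)) :
    Module.Basis (Fin (N + 1) →₀ ℕ) K (MvPolynomial (Fin (N + 1)) K) :=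
  divModBasis (isLeadingExponent_wheelCoeff (ht.ne_zero k.succ_ne_zero) (k + 1))

lemma forall_monomial_eq_zero_iff_wheelBasis
    (L : Module.Dual K (MvPolynomial (Fin (N + 1)) K)) {k : ℕ} {t : K}
    (ht : IsPrimitiveRoot t (k + 1)) (P : ℕ → ℕ → Prop) :
    (∀ a, P a.degree (Finsupp.weight Fin.val a) → L (monomial a 1) = 0) ↔
      ∀ a, P a.degree (Finsupp.weight Fin.val a) → L (wheelBasis ht a) = 0 := by
  have hmonomial : ∀ a, IsWeightedHomogeneous degreeIndexWeight
      (basisMonomials (Fin (N + 1)) K a) (Finsupp.weight degreeIndexWeight a) := fun a =>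
    isWeightedHomogeneous_monomial _ _ _ rfl
  have hwheel : ∀ a, IsWeightedHomogeneous degreeIndexWeight
      (wheelBasis (N := N) ht a) (Finsupp.weight degreeIndexWeight a) := by
    intro a
    rw [wheelBasis, divModBasis_apply]
    exact isWeightedHomogeneous_divModProduct (isWeightedHomogeneous_wheelCoeff t (k + 1)) a
  have h := (forall_dual_basis_eq_zero_iff_le_ker hmonomial {p | P p.1 p.2} L).trans
    (forall_dual_basis_eq_zero_iff_le_ker hwheel {p | P p.1 p.2} L).symm
  simpa only [weight_degreeIndexWeight, coe_basisMonomials, Set.mem_ofPred_eq] using h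

/-- The point `(x, t x, …, t ^ k x, y (k + 1), …, y (n - 1))`, obtained
from `y` by overwriting its first `k + 1` entries. -/
def wheelPoint (k : ℕ) (t : K) {n : ℕ} (x : K) (y : Fin n → K) : Fin n → K :=
  fun j => if (j : ℕ) ≤ k then t ^ (j : ℕ) * x else y j

/-- The space `F_{n,m}^{(k,2)}` of symmetric polynomials in `n` variables, homogeneous of degree
`m`, that vanish at all points `(x, t x, …, t ^ k x, y (k + 1), …, y (n - 1))`. -/
noncomputable def wheelSubmodule (k : ℕ) (t : K) (n m : ℕ) :
    Submodule K (MvPolynomial (Fin n) K) where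
  carrier := {f | f.IsSymmetric ∧ (∀ x y, eval (wheelPoint k t x y) f = 0) ∧ f.IsHomogeneous m}
  zero_mem' := ⟨IsSymmetric.zero, fun _ _ => map_zero _, isHomogeneous_zero _ _ _⟩
  add_mem' := by
    rintro f g ⟨hf, hf', hf''⟩ ⟨hg, hg', hg''⟩
    exact ⟨hf.add hg, fun x y => by rw [map_add, hf', hg', add_zero], hf''.add hg''⟩
  smul_mem' := by
    rintro c f ⟨hf, hf', hf''⟩
    exact ⟨hf.smul c, fun x y => by rw [smul_eval, hf', mul_zero],
      (homogeneousSubmodule (Fin n) K m).smul_mem c hf''⟩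

lemma prod_eval_wheelPoint (k : ℕ) (t : K) {r : ℕ} (x : K) (y : Fin (k + 1 + r) → K) :
    ∏ j, (genericPoly K N).eval (C (wheelPoint k t x y j)) =
      (rotationProduct (genericPoly K N) (C t) (k + 1)).eval (C x) *
        ∏ j, (genericPoly K N).eval (C (y (Fin.natAdd (k + 1) j))) := by
  have hwheel : ∀ j : Fin (k + 1), wheelPoint k t x y (Fin.castAdd r j) = t ^ (j : ℕ) * x :=
    fun j => if_pos (Nat.lt_succ_iff.1 j.2)
  have hfree : ∀ j : Fin r, wheelPoint k t x y (Fin.natAdd (k + 1) j) = y (Fin.natAdd (k + 1) j) :=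
    fun j => if_neg (by rw [Fin.val_natAdd]; omega)
  rw [Fin.prod_univ_add, rotationProduct, Polynomial.eval_prod, Finset.prod_range]
  simp only [hwheel, hfree, Polynomial.eval_comp, Polynomial.eval_mul, Polynomial.eval_pow,
    Polynomial.eval_C, Polynomial.eval_X, map_mul, map_pow]

variable [Infinite K]

open Pointwise in
lemma span_range_prod_eval_genericPoly (r : ℕ) :
    Submodule.span K (Set.range fun y : Fin r → K => ∏ j, (genericPoly K N).eval (C (y j))) =
      homogeneousSubmodule (Fin (N + 1)) K r := by
  rw [← homogeneousSubmodule_one_pow, ← span_range_coeff_genericPoly,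
    ← span_range_eval_algebraMap, Submodule.span_pow]
  congr 1
  ext p
  rw [Set.mem_pow]
  constructor
  · rintro ⟨y, rfl⟩
    exact ⟨fun j => ⟨_, y j, rfl⟩, List.prod_ofFn⟩
  · rintro ⟨f, rfl⟩
    choose y hy using fun j => (f j).2
    refine ⟨y, ?_⟩
    rw [List.prod_ofFn]
    exact Finset.prod_congr rfl fun j _ => hy j

open Pointwise in
lemma span_range_prod_eval_wheelPoint {k : ℕ} {t : K} (ht : IsPrimitiveRoot t (k + 1)) (r : ℕ) :
    Submodule.span K (Set.range fun p : K × (Fin (k + 1 + r) → K) =>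
        ∏ j, (genericPoly K N).eval (C (wheelPoint k t p.1 p.2 j))) =
      Submodule.span K (Set.range (wheelCoeff t (k + 1))) *
        homogeneousSubmodule (Fin (N + 1)) K r := by
  rw [span_range_wheelCoeff k.succ_pos ht, ← span_range_eval_algebraMap,
    ← span_range_prod_eval_genericPoly, Submodule.span_mul_span]
  congr 1
  ext p
  constructor
  · rintro ⟨⟨x, y⟩, rfl⟩
    exact ⟨_, ⟨x, rfl⟩, _, ⟨fun j => y (Fin.natAdd (k + 1) j), rfl⟩,
      (prod_eval_wheelPoint k t x y).symm⟩
  · rintro ⟨_, ⟨x, rfl⟩, _, ⟨y, rfl⟩, rfl⟩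
    refine ⟨(x, Fin.append 0 y), ?_⟩
    simp only [prod_eval_wheelPoint, Fin.append_right]
    rfl

variable (L : Module.Dual K (MvPolynomial (Fin (N + 1)) K))

lemma forall_eval_wheelPoint_symmOfDual_eq_zero_iff {k r : ℕ} {t : K}
    (ht : IsPrimitiveRoot t (k + 1)) :
    (∀ x y, eval (wheelPoint k t x y) (symmOfDual (k + 1 + r) L) = 0) ↔
      ∀ a : Fin (N + 1) →₀ ℕ, a.degree = k + 1 + r → (∃ s, k + 1 ≤ a s) →
        L (wheelBasis ht a) = 0 := by
  have hspan := (span_range_prod_eval_wheelPoint (N := N) ht r).trans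
    (span_range_mul_homogeneousSubmodule
      (isLeadingExponent_wheelCoeff (ht.ne_zero k.succ_ne_zero) (k + 1)) k.succ_pos
      (isHomogeneous_wheelCoeff t (k + 1)) r)
  calc (∀ x y, eval (wheelPoint k t x y) (symmOfDual (k + 1 + r) L) = 0)
      ↔ Submodule.span K (Set.range fun p : K × (Fin (k + 1 + r) → K) =>
        ∏ j, (genericPoly K N).eval (C (wheelPoint k t p.1 p.2 j))) ≤ LinearMap.ker L := by
        simp [Submodule.span_le, Set.range_subset_iff, eval_symmOfDual]
    _ ↔ _ := by
        rw [hspan]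
        simp only [Submodule.span_le, Set.image_subset_iff]
        exact ⟨fun h a hdeg hs => h ⟨hdeg, hs⟩, fun h a ⟨hdeg, hs⟩ => h a hdeg hs⟩

end WheelSubmodule

section AdmissiblePartitions

lemma bijOn_content_antitone {τ : Type*} [LinearOrder τ] (n : ℕ) :
    Set.BijOn content {b : Fin n → τ | Antitone b} {a | a.degree = n} := by
  refine ⟨fun b _ => ?_, fun b hb b' hb' h => ?_, fun a ha => ?_⟩
  · exact (degree_content b).trans (Fintype.card_fin n)
  · obtain ⟨π, rfl⟩ := exists_perm_of_content_eq h
    exact Tuple.unique_antitone (τ := 1) hb hb'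
  · obtain ⟨b, rfl⟩ := exists_content_eq ha
    refine ⟨b ∘ (Fin.revPerm.trans (Tuple.sort b)), ?_, content_comp_perm b _⟩
    exact (Tuple.monotone_sort b).comp_antitone fun i j hij => Fin.rev_le_rev.2 hij

/-- The admissible partitions of weight `m` and length at most `n`, as weakly decreasing `n`-tuples
in which every value, including `0`, occurs at most `k` times. -/
def admissiblePartitions (k n m : ℕ) : Set (Fin n → ℕ) :=
  {l | Antitone l ∧ (∀ i : ℕ, (Finset.univ.filter fun a : Fin n => l a = i).card ≤ k) ∧
    ∑ a, l a = m}

/-- The multiplicity vectors of the admissible partitions of weight `m` and length at most `n`; the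
values of such a partition are at most `m`. -/
def admissibleExponents (k n m : ℕ) : Set (Fin (m + 1) →₀ ℕ) :=
  {a | a.degree = n ∧ Finsupp.weight Fin.val a = m ∧ ∀ s, a s ≤ k}

instance finite_admissibleExponents (k n m : ℕ) : Finite (admissibleExponents k n m) :=
  (Finsupp.finite_of_degree_eq n).subset fun _ ha => ha.1

lemma val_comp_mem_admissiblePartitions_iff {k n m : ℕ} {b : Fin n → Fin (m + 1)} :
    Fin.val ∘ b ∈ admissiblePartitions k n m ↔
      Antitone b ∧ content b ∈ admissibleExponents k n m := by
  have hmult : (∀ i : ℕ, (Finset.univ.filter fun j => (b j : ℕ) = i).card ≤ k) ↔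
      ∀ s, content b s ≤ k := by
    simp only [content_apply, Fin.ext_iff]
    refine ⟨fun h s => h s, fun h i => ?_⟩
    by_cases hi : i < m + 1
    · exact h ⟨i, hi⟩
    · rw [Finset.filter_false_of_mem fun j _ => by omega, Finset.card_empty]
      exact k.zero_le
  have hdeg : (content b).degree = n := (degree_content b).trans (Fintype.card_fin n)
  simp only [admissiblePartitions, admissibleExponents, Set.mem_ofPred_eq, Function.comp_apply,
    hmult, hdeg, weight_content, true_and, and_comm]
  rfl

lemma exists_val_comp_eq_of_mem_admissiblePartitions {k n m : ℕ} {l : Fin n → ℕ}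
    (hl : l ∈ admissiblePartitions k n m) : ∃ b : Fin n → Fin (m + 1), Fin.val ∘ b = l := by
  have hle : ∀ j, l j ≤ m := fun j => by
    rw [← hl.2.2]
    exact Finset.single_le_sum (fun _ _ => Nat.zero_le _) (Finset.mem_univ j)
  exact ⟨fun j => ⟨l j, Nat.lt_succ_iff.2 (hle j)⟩, rfl⟩

lemma card_admissiblePartitions (k n m : ℕ) :
    Nat.card (admissiblePartitions k n m) = Nat.card (admissibleExponents k n m) := by
  let S : Set (Fin n → Fin (m + 1)) := {b | Antitone b ∧ content b ∈ admissibleExponents k n m}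
  have hpartition : Set.BijOn (Fin.val ∘ ·) S (admissiblePartitions k n m) := by
    refine ⟨fun b hb => val_comp_mem_admissiblePartitions_iff.2 hb,
      (Fin.val_injective.comp_left).injOn, fun l hl => ?_⟩
    obtain ⟨b, rfl⟩ := exists_val_comp_eq_of_mem_admissiblePartitions hl
    exact ⟨b, val_comp_mem_admissiblePartitions_iff.1 hl, rfl⟩
  have hexponent : Set.BijOn content S (admissibleExponents k n m) := by
    have h := bijOn_content_antitone (τ := Fin (m + 1)) n
    refine ⟨fun b hb => hb.2, h.injOn.mono fun b hb => hb.1, fun a ha => ?_⟩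
    obtain ⟨b, hb, rfl⟩ := h.surjOn ha.1
    exact ⟨b, ⟨hb, ha⟩, rfl⟩
  exact Nat.card_congr (hpartition.equiv.symm.trans hexponent.equiv)

end AdmissiblePartitions

section Dimension

variable {K : Type*} [Field K] {k m : ℕ} {t : K}

lemma wheelSubmodule_le_range_symmOfDual (n : ℕ) :
    wheelSubmodule k t n m ≤ LinearMap.range (symmOfDual (K := K) (N := m) n) := by
  rintro f ⟨hsymm, -, hhom⟩
  refine exists_symmOfDual_eq hsymm fun d hd j => ?_
  rw [← hhom (mem_support_iff.1 hd), weight_one]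
  exact Finsupp.le_degree j d

lemma symmOfDual_mem_wheelSubmodule_iff [Infinite K] {r : ℕ} (ht : IsPrimitiveRoot t (k + 1))
    (L : Module.Dual K (MvPolynomial (Fin (m + 1)) K)) :
    symmOfDual (k + 1 + r) L ∈ wheelSubmodule k t (k + 1 + r) m ↔
      ∀ a ∈ {a | a.degree = k + 1 + r}, a ∉ admissibleExponents k (k + 1 + r) m →
        L (wheelBasis ht a) = 0 := by
  change _ ∧ _ ∧ _ ↔ _
  rw [forall_eval_wheelPoint_symmOfDual_eq_zero_iff L ht, isHomogeneous_symmOfDual_iff,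
    forall_monomial_eq_zero_iff_wheelBasis L ht fun d w => d = k + 1 + r ∧ w ≠ m]
  constructor
  · rintro ⟨-, hwheel, hweight⟩ a hdeg hadm
    by_cases hw : Finsupp.weight Fin.val a = m
    · refine hwheel a hdeg ?_
      by_contra! hle
      exact hadm ⟨hdeg, hw, fun s => Nat.lt_succ_iff.1 (hle s)⟩
    · exact hweight a ⟨hdeg, hw⟩
  · intro h
    refine ⟨isSymmetric_symmOfDual L, fun a hdeg ⟨s, hs⟩ => h a hdeg fun hadm => ?_,
      fun a ⟨hdeg, hw⟩ => h a hdeg fun hadm => hw hadm.2.1⟩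
    exact (hadm.2.2 s).not_gt hs

end Dimension

end WheelCondition

open WheelCondition in
theorem dim_Fk2_homogeneous_eq_card_admissible_general {K : Type*} [Field K] [Infinite K]
    (k : ℕ) (t : K) (ht : IsPrimitiveRoot t (k + 1)) (n m : ℕ) (hn : k + 1 ≤ n) :
    Module.finrank K (wheelSubmodule k t n m) = Nat.card (admissiblePartitions k n m) := by
  obtain ⟨r, rfl⟩ := Nat.exists_eq_add_of_le hn
  rw [card_admissiblePartitions]
  refine finrank_eq_card_of_mem_iff_dual (wheelBasis ht) (symmOfDual (k + 1 + r))
    (D := {a | a.degree = k + 1 + r}) (fun a ha => ha.1) (fun L => ?_)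
    (wheelSubmodule_le_range_symmOfDual _) (symmOfDual_mem_wheelSubmodule_iff ht)
  rw [symmOfDual_eq_zero_iff]
  exact forall_monomial_eq_zero_iff_wheelBasis L ht fun d _ => d = k + 1 + r

/-- for every `m ≥ 0` and `n ≥ k+1`, the dimension of the space of
polynomials in `F_n^{(k,2)}` that are homogeneous of degree `m` equals the number of
admissible partitions `λ ∈ π_n` of weight `m` (admissible: every value occurs at most
`k` times among the parts). -/
theorem dim_Fk2_homogeneous_eq_card_admissible
    (k : ℕ) (hk : 0 < k) (t : ℂ) (ht : IsPrimitiveRoot t (k + 1))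
    (n m : ℕ) (hn : k + 1 ≤ n) :
    Module.finrank ℂ
      ↥(Submodule.span ℂ {f : MvPolynomial (Fin n) ℂ |
          f.IsSymmetric ∧
          (∀ (x : ℂ) (y : Fin n → ℂ),
            MvPolynomial.eval
              (fun j : Fin n => if (j : ℕ) ≤ k then t ^ (j : ℕ) * x else y j) f = 0) ∧
          f.IsHomogeneous m})
    = Nat.card {l : Fin n → ℕ | Antitone l ∧
        (∀ i : ℕ, (Finset.univ.filter fun a : Fin n => l a = i).card ≤ k) ∧
        ∑ a, l a = m} := by
  exact Submodule.span_eq (WheelCondition.wheelSubmodule k t n m) ▸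
    dim_Fk2_homogeneous_eq_card_admissible_general k t ht n m hn
end

section
/- In the quotient vector space E_n^{(k,2)} = E_n/(J·E_{n−k−1}), the images {ē_λ} of the monomials e_λ, where λ ranges over all admissible partitions in π_n, span E_n^{(k,2)}. -/
open MvPolynomial

/-- In `E = ℂ[e_0, e_1, e_2, …]` (realized as `MvPolynomial ℕ ℂ`, variable `X i = e_i`),
the monomial `e_λ = e_{λ_1}⋯e_{λ_m}` attached to `λ : Fin m → ℕ`. -/
noncomputable def eMon (m : ℕ) (l : Fin m → ℕ) : MvPolynomial ℕ ℂ :=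
  ∏ i, MvPolynomial.X (l i)

/-- `E_m ⊂ E`: the linear span of the monomials `e_λ`, `λ ∈ π_m`. -/
noncomputable def Esub (m : ℕ) : Submodule ℂ (MvPolynomial ℕ ℂ) :=
  Submodule.span ℂ {p | ∃ l : Fin m → ℕ, Antitone l ∧ p = eMon m l}

/-- The coefficient of `z^m` in `∏_{i=0}^{k} e(t^i z)` where `e(z) = Σ_{i≥0} e_i z^i`:
`c_m = Σ_{a_0+⋯+a_k=m} (∏_i t^{i·a_i}) e_{a_0}⋯e_{a_k}`. -/
noncomputable def wheelCoeff (k : ℕ) (t : ℂ) (m : ℕ) : MvPolynomial ℕ ℂ :=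
  ∑ a ∈ Finset.Nat.antidiagonalTuple (k + 1) m,
    (∏ i : Fin (k + 1), t ^ ((i : ℕ) * a i)) • ∏ i, MvPolynomial.X (a i)

/-- `J·E_{n-k-1}`: the span of products of a coefficient of `∏_{i=0}^k e(t^i z)`
with a monomial `e_μ`, `μ ∈ π_{n-k-1}`. -/
noncomputable def JEsub (k n : ℕ) (t : ℂ) : Submodule ℂ (MvPolynomial ℕ ℂ) :=
  Submodule.span ℂ
    {p | ∃ (m : ℕ) (l : Fin (n - k - 1) → ℕ), Antitone l ∧
      p = wheelCoeff k t m * eMon (n - k - 1) l}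

/-!
Modulo `J · E_{n-k-1}`, a monomial `e_r ^ (k + 1) * e_μ` can be traded for a combination of
monomials `e_{a_0} ⋯ e_{a_k} * e_μ` with `∑ a_i = (k + 1) * r` and the `a_i` not all equal to `r`:
such a relation is given by the coefficient of `z ^ ((k + 1) * r)` in `∏ e(t^i z)`, where
`e_r ^ (k + 1)` occurs exactly once, multiplied by a power of `t`. By strict convexity each trade
increases the sum of the squares of the indices while preserving their number and their sum. That
sum of squares is bounded by the square of the sum, so the process ends, necessarily at admissible
monomials.
-/

theorem span_range_quotient_mk_eq_top_iff {R M ι : Type*} [Ring R] [AddCommGroup M] [Module R M]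
    {N P : Submodule R M} {v : ι → N} :
    Submodule.span R
        (Set.range fun i => (Submodule.Quotient.mk (v i) : N ⧸ P.comap N.subtype)) = ⊤ ↔
      N ≤ Submodule.span R (Set.range fun i => (v i : M)) ⊔ P := by
  set S := Submodule.span R (Set.range v)
  have span_mk : Submodule.span R
      (Set.range fun i => (Submodule.Quotient.mk (v i) : N ⧸ P.comap N.subtype)) =
        S.map (P.comap N.subtype).mkQ := by
    rw [Submodule.map_span, ← Set.range_comp]; rfl
  have span_coe : Submodule.span R (Set.range fun i => (v i : M)) = S.map N.subtype := by
    rw [Submodule.map_span, ← Set.range_comp]; rfl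
  have map_sup : (P.comap N.subtype ⊔ S).map N.subtype = (S.map N.subtype ⊔ P) ⊓ N := by
    rw [Submodule.map_sup, Submodule.map_comap_subtype, sup_comm, inf_comm N P,
      sup_inf_assoc_of_le P (Submodule.map_subtype_le N S)]
  rw [span_mk, span_coe, Submodule.map_mkQ_eq_top, ← inf_eq_right, ← map_sup,
    ← (Submodule.map_injective_of_injective N.injective_subtype).eq_iff, Submodule.map_subtype_top]

section Multisets

variable {m n r : ℕ} {v : Multiset ℕ}

theorem exists_antitone_map_univ_val_eq {α : Type*} [LinearOrder α] {s : Multiset α}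
    (hs : s.card = n) : ∃ l : Fin n → α, Antitone l ∧ Finset.univ.val.map l = s := by
  subst hs
  have length_sort : (s.sort (· ≥ ·)).length = s.card := s.length_sort _
  refine ⟨(s.sort (· ≥ ·)).get ∘ Fin.cast length_sort.symm, fun i j hij => ?_, ?_⟩
  · exact (s.pairwise_sort (· ≥ ·)).sortedGE.antitone_get hij
  · conv_rhs => rw [← s.sort_eq (· ≥ ·)]
    rw [Fin.univ_val_map]
    exact congrArg _ (List.ext_get (by simp) (by simp))

theorem sum_map_sq_le_sq_sum (s : Multiset ℕ) : (s.map (· ^ 2)).sum ≤ s.sum ^ 2 := by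
  induction s using Multiset.induction with
  | empty => simp
  | cons a s ih =>
    rw [Multiset.map_cons, Multiset.sum_cons, Multiset.sum_cons]
    nlinarith [Nat.zero_le (a * s.sum)]

theorem mul_sq_lt_sum_map_sq (hcard : v.card = m) (hsum : v.sum = m * r)
    (hne : v ≠ Multiset.replicate m r) : m * r ^ 2 < (v.map (· ^ 2)).sum := by
  obtain ⟨b, hbv, hbr⟩ : ∃ b ∈ v, b ≠ r := by
    by_contra! h
    exact hne (Multiset.eq_replicate.2 ⟨hcard, h⟩)
  have strict_at_b : b * (2 * r) < b ^ 2 + r ^ 2 := by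
    rcases hbr.lt_or_gt with h | h <;> nlinarith
  have am_gm : (v.map (· * (2 * r))).sum < (v.map fun a => a ^ 2 + r ^ 2).sum :=
    Multiset.sum_lt_sum (fun a _ => by nlinarith [two_mul_le_add_sq a r]) ⟨b, hbv, strict_at_b⟩
  rw [Multiset.sum_map_mul_right, Multiset.map_id', hsum, Multiset.sum_map_add, Multiset.map_const',
    Multiset.sum_replicate, hcard, smul_eq_mul] at am_gm
  nlinarith

theorem multiset_induction_of_replicate {P : Multiset ℕ → Prop}
    (base : ∀ s : Multiset ℕ, (∀ i, s.count i < m) → P s)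
    (step : ∀ (r : ℕ) (u : Multiset ℕ),
      (∀ v : Multiset ℕ, v.card = m → v.sum = m * r → v ≠ Multiset.replicate m r → P (v + u)) →
        P (Multiset.replicate m r + u))
    (s : Multiset ℕ) : P s := by
  induction hN : s.sum ^ 2 - (s.map (· ^ 2)).sum using Nat.strong_induction_on generalizing s with
  | _ N ih =>
  by_cases hs : ∀ i, s.count i < m
  · exact base s hs
  push Not at hs
  obtain ⟨r, hr⟩ := hs
  obtain ⟨u, rfl⟩ := Multiset.le_iff_exists_add.1 (Multiset.le_count_iff_replicate_le.1 hr)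
  refine step r u fun v hcard hsum hne => ih _ ?_ _ rfl
  have sq_lt := mul_sq_lt_sum_map_sq hcard hsum hne
  have sq_le := sum_map_sq_le_sq_sum (v + u)
  simp only [Multiset.map_add, Multiset.sum_add, Multiset.map_replicate, Multiset.sum_replicate,
    smul_eq_mul, hsum] at hN sq_le ⊢
  omega

end Multisets

theorem eMon_eq_prod_map_X {n : ℕ} (l : Fin n → ℕ) :
    eMon n l = ((Finset.univ.val.map l).map X).prod := by
  rw [Multiset.map_map]; rfl

/-- The span of the admissible monomials `e_λ`, `λ ∈ π_n`. As in `Esub`, `λ` is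
encoded as a weakly decreasing function on `Fin n`. -/
noncomputable def admissibleSpan (k n : ℕ) : Submodule ℂ (MvPolynomial ℕ ℂ) :=
  Submodule.span ℂ
    (Set.range fun l : {l : Fin n → ℕ // Antitone l ∧
        ∀ i : ℕ, (Finset.univ.filter fun a : Fin n => l a = i).card ≤ k} => eMon n l.1)

section Straightening

variable {k n : ℕ} {t : ℂ}

theorem prod_map_X_mem_admissibleSpan {s : Multiset ℕ} (hcard : s.card = n)
    (hs : ∀ i, s.count i ≤ k) : (s.map X).prod ∈ admissibleSpan k n := by
  obtain ⟨l, hl, rfl⟩ := exists_antitone_map_univ_val_eq hcard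
  refine Submodule.subset_span ⟨⟨l, hl, fun i => ?_⟩, eMon_eq_prod_map_X l⟩
  simpa only [Multiset.count_map, Finset.card_def, Finset.filter_val, eq_comm] using hs i

theorem wheelCoeff_mul_prod_map_X_mem_JEsub {u : Multiset ℕ} (hu : u.card = n - k - 1) (m : ℕ) :
    wheelCoeff k t m * (u.map X).prod ∈ JEsub k n t := by
  obtain ⟨l, hl, rfl⟩ := exists_antitone_map_univ_val_eq hu
  exact Submodule.subset_span ⟨m, l, hl, by rw [eMon_eq_prod_map_X]⟩

theorem X_pow_mul_mem_of_wheelCoeff_mul_mem (ht : t ≠ 0) {M : Submodule ℂ (MvPolynomial ℕ ℂ)}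
    {r : ℕ} {q : MvPolynomial ℕ ℂ} (hwheel : wheelCoeff k t ((k + 1) * r) * q ∈ M)
    (hother : ∀ a : Fin (k + 1) → ℕ, ∑ i, a i = (k + 1) * r → a ≠ (fun _ => r) →
      eMon (k + 1) a * q ∈ M) :
    X r ^ (k + 1) * q ∈ M := by
  have const_mem : (fun _ => r) ∈ Finset.Nat.antidiagonalTuple (k + 1) ((k + 1) * r) := by
    simp [Finset.Nat.mem_antidiagonalTuple]
  rw [wheelCoeff, ← Finset.add_sum_erase _ _ const_mem, add_mul, Finset.sum_mul] at hwheel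
  have leading_mem := (M.add_mem_iff_left (M.sum_mem fun a ha => ?_)).1 hwheel
  · have coeff_ne_zero : ∏ i : Fin (k + 1), t ^ ((i : ℕ) * r) ≠ 0 :=
      Finset.prod_ne_zero_iff.2 fun i _ => pow_ne_zero _ ht
    rw [smul_mul_assoc, M.smul_mem_iff coeff_ne_zero] at leading_mem
    simpa only [Finset.prod_const, Finset.card_univ, Fintype.card_fin] using leading_mem
  · obtain ⟨hne, hsum⟩ := Finset.mem_erase.1 ha
    rw [smul_mul_assoc]
    exact M.smul_mem _ (hother a (Finset.Nat.mem_antidiagonalTuple.1 hsum) hne)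

theorem prod_map_X_mem_admissibleSpan_sup_JEsub (ht : t ≠ 0) (s : Multiset ℕ) (hs : s.card = n) :
    (s.map X).prod ∈ admissibleSpan k n ⊔ JEsub k n t := by
  induction s using multiset_induction_of_replicate (m := k + 1) with
  | base s hadm =>
    exact Submodule.mem_sup_left
      (prod_map_X_mem_admissibleSpan hs fun i => Nat.le_of_lt_succ (hadm i))
  | step r u ih =>
    rw [Multiset.card_add, Multiset.card_replicate] at hs
    rw [Multiset.map_add, Multiset.prod_add, Multiset.map_replicate, Multiset.prod_replicate]
    refine X_pow_mul_mem_of_wheelCoeff_mul_mem ht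
      (Submodule.mem_sup_right (wheelCoeff_mul_prod_map_X_mem_JEsub (by omega) _))
      fun a hsum hne => ?_
    have card_map : (Finset.univ.val.map a).card = k + 1 := by simp
    have map_ne : Finset.univ.val.map a ≠ Multiset.replicate (k + 1) r := fun h =>
      hne (funext fun i =>
        Multiset.eq_of_mem_replicate (h ▸ Multiset.mem_map_of_mem a (Finset.mem_univ i)))
    rw [eMon_eq_prod_map_X, ← Multiset.prod_add, ← Multiset.map_add]
    exact ih _ card_map hsum map_ne (by rw [Multiset.card_add, card_map, hs])

theorem Esub_le_admissibleSpan_sup_JEsub (ht : t ≠ 0) :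
    Esub n ≤ admissibleSpan k n ⊔ JEsub k n t := by
  refine Submodule.span_le.2 ?_
  rintro _ ⟨l, -, rfl⟩
  rw [eMon_eq_prod_map_X]
  exact prod_map_X_mem_admissibleSpan_sup_JEsub ht _ (by simp)

end Straightening

theorem admissible_eMon_span_quotient_general (k n : ℕ) (t : ℂ) (ht : t ≠ 0) :
    Submodule.span ℂ
      (Set.range fun l : {l : Fin n → ℕ // Antitone l ∧
          ∀ i : ℕ, (Finset.univ.filter fun a : Fin n => l a = i).card ≤ k} =>
        (Submodule.Quotient.mk
          (⟨eMon n l.1, Submodule.subset_span ⟨l.1, l.2.1, rfl⟩⟩ : Esub n) :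
          ↥(Esub n) ⧸ (JEsub k n t).comap (Esub n).subtype)) = ⊤ :=
  span_range_quotient_mk_eq_top_iff.2 (Esub_le_admissibleSpan_sup_JEsub ht)

/-- in the quotient `E_n^{(k,2)} = E_n/(J·E_{n-k-1})`, the images of the
monomials `e_λ` with `λ ∈ π_n` admissible (every value occurring at most `k` times)
span the quotient. -/
theorem admissible_eMon_span_quotient
    (k n : ℕ) (hk : 0 < k) (t : ℂ) (ht : IsPrimitiveRoot t (k + 1)) (hn : k + 1 ≤ n) :
    Submodule.span ℂ
      (Set.range fun l : {l : Fin n → ℕ // Antitone l ∧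
          ∀ i : ℕ, (Finset.univ.filter fun a : Fin n => l a = i).card ≤ k} =>
        (Submodule.Quotient.mk
          (⟨eMon n l.1, Submodule.subset_span ⟨l.1, l.2.1, rfl⟩⟩ : Esub n) :
          ↥(Esub n) ⧸ (JEsub k n t).comap (Esub n).subtype)) = ⊤ :=
  admissible_eMon_span_quotient_general k n t (ht.ne_zero k.succ_ne_zero)
end

section
/- In the quotient vector space E_n^{(k,2)} = E_n/(J·E_{n−k−1}), the images {ē_λ} of the monomials e_λ, where λ ranges over all admissible partitions in π_n, form a basis of E_n^{(k,2)} (i.e., they are linearly independent and span). -/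
open MvPolynomial

/-!
Write `c_m` for the coefficient of `z ^ m` in `∏ i, e(t ^ i z)`. Permuting the factors cyclically
replaces `z` by `t z`, so `t ^ m c_m = c_m` and only the `c_{(k+1)j}` survive. Among the tuples
`a_0 + ⋯ + a_k = (k+1)j` the constant one is the unique minimizer of `∑ a_i ^ 2`, so
`e_j ^ (k+1)` is the leading monomial of `c_{(k+1)j}` for the order by decreasing second moment,
and its coefficient is a power of `t`. Replacing as many factors `e_j ^ (k+1)` as possible by
`c_{(k+1)j}` in every monomial therefore gives a basis of `E`, related to the monomial basis by a
triangular matrix with invertible diagonal. Its members with at least one replaced factor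
span the ideal generated by `J`, and the remaining ones are the admissible monomials.
-/

section QuotientOfSubmodule

variable {ι R M : Type*} [Ring R] [AddCommGroup M] [Module R M] {E J : Submodule R M} {v : ι → E}

theorem linearIndependent_mk_comap_subtype (hv : LinearIndependent R fun i => (v i : M))
    (hJ : Disjoint (Submodule.span R (Set.range fun i => (v i : M))) J) :
    LinearIndependent R
      fun i => (Submodule.Quotient.mk (v i) : E ⧸ J.comap E.subtype) := by
  refine .of_comp (Submodule.mapQ _ J E.subtype le_rfl) ?_
  exact hv.map (f := J.mkQ) (by rwa [Submodule.ker_mkQ])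

theorem span_range_mk_comap_subtype_eq_top
    (hE : E ≤ J ⊔ Submodule.span R (Set.range fun i => (v i : M))) :
    Submodule.span R
      (Set.range fun i => (Submodule.Quotient.mk (v i) : E ⧸ J.comap E.subtype)) = ⊤ := by
  have span_coe : Submodule.span R (Set.range fun i => (v i : M)) =
      (Submodule.span R (Set.range v)).map E.subtype := by
    rw [← Submodule.span_image, ← Set.range_comp]; rfl
  have span_mk : Submodule.span R
      (Set.range fun i => (Submodule.Quotient.mk (v i) : E ⧸ J.comap E.subtype)) =
      (Submodule.span R (Set.range v)).map (J.comap E.subtype).mkQ := by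
    rw [← Submodule.span_image, ← Set.range_comp]; rfl
  rw [span_mk, Submodule.map_mkQ_eq_top, eq_top_iff]
  rintro x -
  obtain ⟨a, ha, b, hb, hab⟩ := Submodule.mem_sup.1 (hE x.2)
  rw [span_coe] at hb
  obtain ⟨y, hy, rfl⟩ := hb
  refine Submodule.mem_sup.2 ⟨x - y, ?_, y, hy, sub_add_cancel x y⟩
  simpa [← hab] using ha

end QuotientOfSubmodule

section LeadingMonomial

variable {σ R : Type*} [CommRing R]

/-- `m` is the leading exponent of `p` for the strict order `r`, and its coefficient is invertible:
all other exponents `x` of `p` satisfy `r x m`. The order need not be total. -/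
def HasLeadingMonomial (r : (σ →₀ ℕ) → (σ →₀ ℕ) → Prop) (p : MvPolynomial σ R) (m : σ →₀ ℕ) :
    Prop :=
  ∃ u : Rˣ, p - monomial m (u : R) ∈ restrictSupport R {x | r x m}

variable {r : (σ →₀ ℕ) → (σ →₀ ℕ) → Prop}

theorem hasLeadingMonomial_monomial (m : σ →₀ ℕ) :
    HasLeadingMonomial r (monomial m (1 : R)) m :=
  ⟨1, by simp⟩

namespace HasLeadingMonomial

variable {p q : MvPolynomial σ R} {m n : σ →₀ ℕ}

theorem coeff_eq_zero (hp : HasLeadingMonomial r p m) {x : σ →₀ ℕ} (hne : m ≠ x) (hr : ¬ r x m) :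
    coeff x p = 0 := by
  classical
  obtain ⟨u, hu⟩ := hp
  have hx : coeff x (p - monomial m (u : R)) = 0 :=
    notMem_support_iff.1 fun hx => hr ((mem_restrictSupport_iff R).1 hu hx)
  simpa [coeff_monomial, hne] using hx

theorem isUnit_coeff [Std.Irrefl r] (hp : HasLeadingMonomial r p m) : IsUnit (coeff m p) := by
  classical
  obtain ⟨u, hu⟩ := hp
  have hm : coeff m (p - monomial m (u : R)) = 0 :=
    notMem_support_iff.1 fun hm => irrefl_of r m ((mem_restrictSupport_iff R).1 hu hm)
  rw [coeff_sub, coeff_monomial, if_pos rfl, sub_eq_zero] at hm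
  exact hm ▸ u.isUnit

theorem mem_restrictSupport (hp : HasLeadingMonomial r p m) {S : Set (σ →₀ ℕ)} (hm : m ∈ S)
    (hS : ∀ x, r x m → x ∈ S) : p ∈ restrictSupport R S := by
  obtain ⟨u, hu⟩ := hp
  rw [← sub_add_cancel p (monomial m (u : R))]
  exact add_mem (restrictSupport_mono R hS hu) ((monomial_mem_restrictSupport R).2 (.inl hm))

variable [IsTrans _ r] [CovariantClass (σ →₀ ℕ) (σ →₀ ℕ) (· + ·) r]

theorem mul (hp : HasLeadingMonomial r p m) (hq : HasLeadingMonomial r q n) :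
    HasLeadingMonomial r (p * q) (m + n) := by
  have add_left (x) {y z} (h : r y z) : r (x + y) (x + z) := act_rel_act_of_rel x h
  have add_right (x) {y z} (h : r y z) : r (y + x) (z + x) := by
    simpa only [add_comm _ x] using add_left x h
  have hq_mem : q ∈ restrictSupport R {y | y = n ∨ r y n} :=
    hq.mem_restrictSupport (.inl rfl) fun _ => .inr
  obtain ⟨u, hu⟩ := hp
  obtain ⟨v, hv⟩ := hq
  have hm : monomial m (u : R) ∈ restrictSupport R {m} :=
    (monomial_mem_restrictSupport R).2 (.inl rfl)
  have split : p * q - monomial (m + n) ((u * v : Rˣ) : R) =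
      (p - monomial m (u : R)) * q + monomial m (u : R) * (q - monomial n (v : R)) := by
    rw [Units.val_mul, ← monomial_mul]; ring
  refine ⟨u * v, split ▸ add_mem ?_ ?_⟩
  · have := Submodule.mul_mem_mul hu hq_mem
    rw [← restrictSupport_add] at this
    refine restrictSupport_mono R ?_ this
    rintro _ ⟨x, hx, y, rfl | hy, rfl⟩
    · exact add_right y hx
    · exact trans_of r (add_right y hx) (add_left m hy)
  · have := Submodule.mul_mem_mul hm hv
    rw [← restrictSupport_add] at this
    refine restrictSupport_mono R ?_ this
    rintro _ ⟨_, rfl, y, hy, rfl⟩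
    exact add_left _ hy

theorem prod {ι : Type*} (s : Finset ι) {p : ι → MvPolynomial σ R} {m : ι → σ →₀ ℕ}
    (h : ∀ i ∈ s, HasLeadingMonomial r (p i) (m i)) :
    HasLeadingMonomial r (∏ i ∈ s, p i) (∑ i ∈ s, m i) := by
  classical
  induction s using Finset.induction_on with
  | empty => exact hasLeadingMonomial_monomial 0
  | insert i s hi ih =>
    rw [Finset.prod_insert hi, Finset.sum_insert hi]
    exact (h i (s.mem_insert_self i)).mul (ih fun j hj => h j (Finset.mem_insert_of_mem hj))

theorem pow (hp : HasLeadingMonomial r p m) (c : ℕ) : HasLeadingMonomial r (p ^ c) (c • m) := by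
  simpa using prod (Finset.range c) fun _ _ => hp

end HasLeadingMonomial

variable {B : (σ →₀ ℕ) → MvPolynomial σ R}

theorem linearIndependent_of_hasLeadingMonomial [IsStrictOrder _ r]
    (hB : ∀ m, HasLeadingMonomial r (B m) m) : LinearIndependent R B := by
  rw [linearIndependent_iff]
  intro l hl
  by_contra hne
  obtain ⟨m₀, hm₀⟩ := Finsupp.support_nonempty_iff.2 hne
  -- Induct downwards from the maximal exponents of the relation.
  refine Finsupp.mem_support_iff.1 hm₀ <| Set.WellFoundedOn.induction (r := Function.swap r)
    l.support.finite_toSet.wellFoundedOn (P := fun m => l m = 0) hm₀ fun m hm ih => ?_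
  have coeff_eq : l m * coeff m (B m) = 0 := by
    have := congrArg (coeff m) hl
    rw [Finsupp.linearCombination_apply, Finsupp.sum, coeff_sum,
      Finset.sum_eq_single_of_mem m hm] at this
    · simpa using this
    intro x hx hxm
    by_cases hr : r m x
    · simp [ih x hx hr]
    · simp [(hB x).coeff_eq_zero hxm hr]
  exact (hB m).isUnit_coeff.mul_left_eq_zero.1 coeff_eq

theorem span_image_eq_restrictSupport_of_hasLeadingMonomial [IsWellFounded _ r]
    (hB : ∀ m, HasLeadingMonomial r (B m) m) {S : Set (σ →₀ ℕ)}
    (hS : ∀ m ∈ S, ∀ x, r x m → x ∈ S) :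
    Submodule.span R (B '' S) = restrictSupport R S := by
  refine le_antisymm (Submodule.span_le.2 ?_) ?_
  · rintro _ ⟨m, hm, rfl⟩
    exact (hB m).mem_restrictSupport hm (hS m hm)
  rw [restrictSupport_eq_span, Submodule.span_le, Set.image_subset_iff]
  intro m
  induction m using IsWellFounded.induction r with
  | _ m ih =>
  intro hm
  obtain ⟨u, hu⟩ := hB m
  have lower_mem : B m - monomial m (u : R) ∈ Submodule.span R (B '' S) := by
    rw [restrictSupport_eq_span] at hu
    refine Submodule.span_le.2 ?_ hu
    rintro _ ⟨x, hx, rfl⟩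
    exact ih x hx (hS m hm x hx)
  have leading_mem : monomial m (u : R) ∈ Submodule.span R (B '' S) := by
    simpa using sub_mem (Submodule.subset_span (Set.mem_image_of_mem B hm)) lower_mem
  simpa [smul_monomial] using Submodule.smul_mem _ ((u⁻¹ : Rˣ) : R) leading_mem

end LeadingMonomial

section SubstPow

variable {σ R : Type*} [CommRing R] (f : σ → MvPolynomial σ R) (d : ℕ)

/-- The monomial with exponent `m` in which as many factors `X j ^ d` as possible are replaced
by `f j`. -/
noncomputable def substPow (m : σ →₀ ℕ) : MvPolynomial σ R :=
  m.prod fun j c => f j ^ (c / d) * X j ^ (c % d)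

variable {d}

theorem substPow_eq_monomial {m : σ →₀ ℕ} (hm : ∀ j, m j < d) :
    substPow f d m = monomial m 1 := by
  rw [substPow, monomial_eq, C_1, one_mul]
  refine Finsupp.prod_congr fun j _ => ?_
  rw [Nat.div_eq_of_lt (hm j), Nat.mod_eq_of_lt (hm j), pow_zero, one_mul]

theorem substPow_add_single (hd : 0 < d) (m : σ →₀ ℕ) (j : σ) :
    substPow f d (m + Finsupp.single j d) = f j * substPow f d m := by
  classical
  have erase_eq : (m + Finsupp.single j d).erase j = m.erase j := by
    rw [Finsupp.erase_add, Finsupp.erase_single, add_zero]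
  rw [substPow, substPow, ← Finsupp.mul_prod_erase' m j _ (by simp),
    ← Finsupp.mul_prod_erase' (m + Finsupp.single j d) j _ (by simp), erase_eq]
  simp only [Finsupp.add_apply, Finsupp.single_eq_same, Nat.add_mod_right,
    Nat.add_div_right _ hd]
  ring

variable {f} {r : (σ →₀ ℕ) → (σ →₀ ℕ) → Prop}

variable [IsTrans _ r] [CovariantClass (σ →₀ ℕ) (σ →₀ ℕ) (· + ·) r]

theorem hasLeadingMonomial_substPow
    (hf : ∀ j, HasLeadingMonomial r (f j) (Finsupp.single j d)) (m : σ →₀ ℕ) :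
    HasLeadingMonomial r (substPow f d m) m := by
  have factor (j : σ) : HasLeadingMonomial r (f j ^ (m j / d) * X j ^ (m j % d))
      (Finsupp.single j (m j)) := by
    have h := ((hf j).pow (m j / d)).mul
      ((hasLeadingMonomial_monomial (Finsupp.single j 1)).pow (m j % d))
    rwa [Finsupp.smul_single, Finsupp.smul_single, ← Finsupp.single_add, smul_eq_mul, smul_eq_mul,
      mul_one, Nat.div_add_mod'] at h
  have h := HasLeadingMonomial.prod m.support fun j _ => factor j
  rwa [show ∑ j ∈ m.support, Finsupp.single j (m j) = m from Finsupp.sum_single m] at h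

variable [IsWellFounded _ r]

theorem ideal_span_range_le_span_substPow (hd : 0 < d)
    (hf : ∀ j, HasLeadingMonomial r (f j) (Finsupp.single j d)) :
    (Ideal.span (Set.range f)).restrictScalars R ≤
      Submodule.span R (substPow f d '' {m | ∃ j, d ≤ m j}) := by
  have span_range : Submodule.span R (Set.range (substPow f d)) = ⊤ := by
    rw [← Set.image_univ, span_image_eq_restrictSupport_of_hasLeadingMonomial
      (hasLeadingMonomial_substPow hf) (fun _ _ _ _ => Set.mem_univ _), restrictSupport_univ]
  rw [Ideal.span, ← Submodule.span_smul_of_span_eq_top span_range, Submodule.span_le]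
  rintro _ ⟨_, ⟨m, rfl⟩, _, ⟨j, rfl⟩, rfl⟩
  refine Submodule.subset_span ⟨m + Finsupp.single j d, ⟨j, by simp⟩, ?_⟩
  exact (substPow_add_single f hd m j).trans (mul_comm _ _)

theorem disjoint_restrictSupport_ideal_span_range (hd : 0 < d)
    (hf : ∀ j, HasLeadingMonomial r (f j) (Finsupp.single j d)) :
    Disjoint (restrictSupport R {m | ∀ j, m j < d})
      ((Ideal.span (Set.range f)).restrictScalars R) := by
  have reduced : restrictSupport R {m : σ →₀ ℕ | ∀ j, m j < d} =
      Submodule.span R (substPow f d '' {m | ∀ j, m j < d}) := by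
    rw [restrictSupport_eq_span]
    exact congrArg _ (Set.image_congr fun m hm => (substPow_eq_monomial f hm).symm)
  have indices : Disjoint {m : σ →₀ ℕ | ∀ j, m j < d} {m | ∃ j, d ≤ m j} :=
    Set.disjoint_left.2 fun m hm ⟨j, hj⟩ => (hm j).not_ge hj
  have : IsStrictOrder _ r := ⟨⟩
  rw [reduced]
  exact ((linearIndependent_of_hasLeadingMonomial
    (hasLeadingMonomial_substPow hf)).disjoint_span_image indices).mono_right
      (ideal_span_range_le_span_substPow hd hf)

theorem restrictSupport_degree_le_sup (hd : 0 < d)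
    (hf : ∀ j, HasLeadingMonomial r (f j) (Finsupp.single j d))
    (hr : ∀ x m, r x m → x.degree = m.degree) (n : ℕ) :
    restrictSupport R {m | m.degree = n} ≤
      Submodule.span R (Set.range f) * restrictSupport R {m | m.degree = n - d} ⊔
        restrictSupport R {m | m.degree = n ∧ ∀ j, m j < d} := by
  have lead := hasLeadingMonomial_substPow hf
  rw [← span_image_eq_restrictSupport_of_hasLeadingMonomial lead
    (S := {m | m.degree = n}) fun m hm x hx => (hr x m hx).trans hm, Submodule.span_le]
  rintro _ ⟨m, hm, rfl⟩
  by_cases hred : ∀ j, m j < d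
  · rw [substPow_eq_monomial f hred]
    exact Submodule.mem_sup_right ((monomial_mem_restrictSupport R).2 (.inl ⟨hm, hred⟩))
  · push Not at hred
    obtain ⟨j, hj⟩ := hred
    obtain ⟨m, rfl⟩ := le_iff_exists_add'.1 (Finsupp.single_le_iff.2 hj)
    have degree_eq : m.degree = n - d := by
      rw [← hm.out, map_add, Finsupp.degree_single, Nat.add_sub_cancel]
    rw [substPow_add_single f hd]
    refine Submodule.mem_sup_left (Submodule.mul_mem_mul (Submodule.subset_span ⟨j, rfl⟩) ?_)
    exact (lead m).mem_restrictSupport degree_eq fun x hx => (hr x m hx).trans degree_eq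

end SubstPow

section Exponent

variable {α : Type*} {n : ℕ}

/-- The exponent of the monomial `∏ i, X (l i)`: the multiplicity function of the tuple `l`. -/
noncomputable def exponent (l : Fin n → α) : α →₀ ℕ :=
  ∑ i, Finsupp.single (l i) 1

theorem prod_X_eq_monomial_exponent {R : Type*} [CommSemiring R] (l : Fin n → α) :
    ∏ i, (X (l i) : MvPolynomial α R) = monomial (exponent l) 1 :=
  (monomial_sum_one _ _).symm

theorem exponent_apply [DecidableEq α] (l : Fin n → α) (a : α) :
    exponent l a = (Finset.univ.filter fun i => l i = a).card := by
  simp only [exponent, Finsupp.finsetSum_apply, Finsupp.single_apply, Finset.card_filter]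

theorem weight_exponent {M : Type*} [AddCommMonoid M] (w : α → M) (l : Fin n → α) :
    Finsupp.weight w (exponent l) = ∑ i, w (l i) := by
  simp [exponent, Finsupp.weight_single]

theorem degree_exponent (l : Fin n → α) : (exponent l).degree = n := by
  simp [exponent]

theorem toMultiset_exponent (l : Fin n → α) :
    Finsupp.toMultiset (exponent l) = (List.ofFn l : Multiset α) := by
  rw [exponent, Finsupp.toMultiset_sum, ← Fin.univ_val_map]
  simp only [Finsupp.toMultiset_single, one_smul]
  rw [Finset.sum, ← Function.comp_def, ← Multiset.map_map, Multiset.sum_map_singleton]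

theorem exponent_injOn_antitone [PartialOrder α] :
    Set.InjOn (exponent : (Fin n → α) → α →₀ ℕ) {l | Antitone l} := by
  intro l hl l' hl' h
  have perm : (List.ofFn l).Perm (List.ofFn l') := by
    rw [← Multiset.coe_eq_coe, ← toMultiset_exponent, ← toMultiset_exponent, h]
  exact List.ofFn_injective (perm.eq_of_sortedGE hl.sortedGE_ofFn hl'.sortedGE_ofFn)

theorem exists_antitone_exponent_eq [LinearOrder α] (m : α →₀ ℕ) :
    ∃ l : Fin m.degree → α, Antitone l ∧ exponent l = m := by
  set L := (Finsupp.toMultiset m).sort (· ≥ ·) with hL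
  have length_eq : L.length = m.degree := by
    rw [hL, Multiset.length_sort, Finsupp.card_toMultiset]; rfl
  rw [← length_eq]
  refine ⟨L.get, (Multiset.pairwise_sort _ _).sortedGE.antitone_get, ?_⟩
  apply Multiset.toFinsupp.symm.injective
  change Finsupp.toMultiset _ = Finsupp.toMultiset _
  rw [toMultiset_exponent, List.ofFn_get, hL, Multiset.sort_eq]

end Exponent

section MoreSpread

/-- The order on exponents for which `X j ^ d` leads among the monomials of its degree and weight:
`x` lies below `m` when both have the same degree and the same weight `∑ i, i * m i`, while the
second moment `∑ i, i ^ 2 * m i` of `x` is larger. -/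
def MoreSpread (x m : ℕ →₀ ℕ) : Prop :=
  x.degree = m.degree ∧ Finsupp.weight id x = Finsupp.weight id m ∧
    Finsupp.weight (· ^ 2) m < Finsupp.weight (· ^ 2) x

instance : IsTrans _ MoreSpread where
  trans _ _ _ h h' := ⟨h.1.trans h'.1, h.2.1.trans h'.2.1, h'.2.2.trans h.2.2⟩

instance : CovariantClass (ℕ →₀ ℕ) (ℕ →₀ ℕ) (· + ·) MoreSpread where
  elim _ _ _ h := by simpa [MoreSpread] using h

theorem weight_sq_le_sq_weight (m : ℕ →₀ ℕ) :
    Finsupp.weight (· ^ 2) m ≤ Finsupp.weight id m ^ 2 := by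
  induction m using Finsupp.induction_linear with
  | zero => simp
  | add f g hf hg =>
    rw [map_add, map_add]
    exact (add_le_add hf hg).trans
      (pow_add_pow_le (Nat.zero_le _) (Nat.zero_le _) two_ne_zero)
  | single i c =>
    simp only [Finsupp.weight_single, smul_eq_mul, id, mul_pow]
    exact Nat.mul_le_mul_right _ (Nat.le_self_pow two_ne_zero c)

instance : IsWellFounded _ MoreSpread where
  wf := by
    refine Subrelation.wf (fun {x m} h => ?_)
      (measure fun m => Finsupp.weight id m ^ 2 - Finsupp.weight (· ^ 2) m).wf
    have bound := weight_sq_le_sq_weight x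
    obtain ⟨-, weight_eq, sq_lt⟩ := h
    change Finsupp.weight id x ^ 2 - _ < Finsupp.weight id m ^ 2 - _
    rw [weight_eq] at bound ⊢
    omega

end MoreSpread

theorem card_mul_sq_lt_sum_sq {ι R : Type*} [Fintype ι] [CommRing R] [LinearOrder R]
    [IsStrictOrderedRing R] {a : ι → R} {c : R} (hsum : ∑ i, a i = Fintype.card ι * c)
    (hne : a ≠ fun _ => c) : Fintype.card ι * c ^ 2 < ∑ i, a i ^ 2 := by
  obtain ⟨i, hi⟩ := Function.ne_iff.1 hne
  have variance_pos : 0 < ∑ i, (a i - c) ^ 2 :=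
    Finset.sum_pos' (fun i _ => sq_nonneg _)
      ⟨i, Finset.mem_univ i, sq_pos_of_ne_zero (sub_ne_zero.2 hi)⟩
  have variance_eq : ∑ i, (a i - c) ^ 2 = ∑ i, a i ^ 2 - Fintype.card ι * c ^ 2 := by
    simp only [sub_sq, Finset.sum_add_distrib, Finset.sum_sub_distrib, ← Finset.sum_mul,
      ← Finset.mul_sum, hsum, Finset.sum_const, Finset.card_univ, nsmul_eq_mul]
    ring
  rwa [variance_eq, sub_pos] at variance_pos

theorem moreSpread_exponent {n j : ℕ} {a : Fin n → ℕ} (hsum : ∑ i, a i = n * j)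
    (hne : a ≠ fun _ => j) : MoreSpread (exponent a) (Finsupp.single j n) := by
  have sq_lt : n * (j : ℤ) ^ 2 < ∑ i, (a i : ℤ) ^ 2 := by
    have h := card_mul_sq_lt_sum_sq (a := fun i => (a i : ℤ)) (c := (j : ℤ))
      (by rw [Fintype.card_fin]; exact_mod_cast hsum)
      (fun h => hne (funext fun i => by exact_mod_cast congrFun h i))
    rwa [Fintype.card_fin] at h
  refine ⟨?_, ?_, ?_⟩
  · rw [degree_exponent, Finsupp.degree_single]
  · rw [weight_exponent, Finsupp.weight_single]
    exact hsum
  · rw [weight_exponent, Finsupp.weight_single]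
    exact_mod_cast sq_lt

section WheelCoeff

variable {k : ℕ} {t : ℂ}

theorem pow_val_add_one {M : Type*} [Monoid M] {x : M} (hx : x ^ (k + 1) = 1) (i : Fin (k + 1)) :
    x ^ ((i + 1 : Fin (k + 1)) : ℕ) = x ^ ((i : ℕ) + 1) := by
  rw [Fin.val_add, Fin.val_one', Nat.add_mod_mod, ← pow_eq_pow_mod _ hx]

theorem prod_pow_val_mul_comp_sub_one {M : Type*} [CommMonoid M] {x : M} (hx : x ^ (k + 1) = 1)
    (a : Fin (k + 1) → ℕ) :
    ∏ i : Fin (k + 1), x ^ ((i : ℕ) * a (i - 1)) =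
      x ^ (∑ i, a i) * ∏ i : Fin (k + 1), x ^ ((i : ℕ) * a i) := by
  rw [← Equiv.prod_comp (Equiv.addRight (1 : Fin (k + 1))), ← Finset.prod_pow_eq_pow_sum,
    ← Finset.prod_mul_distrib]
  refine Finset.prod_congr rfl fun i _ => ?_
  rw [Equiv.coe_addRight, add_sub_cancel_right, pow_mul, pow_val_add_one hx, ← pow_mul, add_mul,
    one_mul, pow_add, mul_comm]

-- Cyclically permuting the factors of `∏ e(t ^ i z)` amounts to replacing `z` by `t z`.
theorem pow_smul_wheelCoeff (ht : t ^ (k + 1) = 1) (m : ℕ) :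
    t ^ m • wheelCoeff k t m = wheelCoeff k t m := by
  let shift : (Fin (k + 1) → ℕ) ≃ (Fin (k + 1) → ℕ) :=
    (Equiv.subRight 1).symm.arrowCongr (Equiv.refl ℕ)
  have shift_apply (a : Fin (k + 1) → ℕ) (i : Fin (k + 1)) : shift a i = a (i - 1) := rfl
  rw [wheelCoeff, Finset.smul_sum]
  refine Finset.sum_equiv shift (fun a => ?_) fun a ha => ?_
  · simp only [Finset.Nat.mem_antidiagonalTuple, shift_apply]
    rw [← Equiv.sum_comp (Equiv.subRight 1) a]
    rfl
  · rw [Finset.Nat.mem_antidiagonalTuple] at ha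
    have prod_X_shift : ∏ i, (X (a (i - 1)) : MvPolynomial ℕ ℂ) = ∏ i, X (a i) :=
      Equiv.prod_comp (Equiv.subRight 1) fun i => (X (a i) : MvPolynomial ℕ ℂ)
    simp only [shift_apply]
    rw [prod_X_shift, prod_pow_val_mul_comp_sub_one ht, ha, smul_smul]

theorem wheelCoeff_eq_zero (ht : IsPrimitiveRoot t (k + 1)) {m : ℕ} (hm : ¬ (k + 1) ∣ m) :
    wheelCoeff k t m = 0 := by
  have sub_smul_eq : (t ^ m - 1) • wheelCoeff k t m = 0 := by
    rw [sub_smul, one_smul, pow_smul_wheelCoeff ht.pow_eq_one, sub_self]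
  exact (smul_eq_zero.1 sub_smul_eq).resolve_left
    (sub_ne_zero.2 fun h => hm (ht.dvd_of_pow_eq_one m h))

theorem hasLeadingMonomial_wheelCoeff (ht : t ≠ 0) (j : ℕ) :
    HasLeadingMonomial MoreSpread (wheelCoeff k t ((k + 1) * j)) (Finsupp.single j (k + 1)) := by
  have const_mem :
      (fun _ => j) ∈ Finset.Nat.antidiagonalTuple (k + 1) ((k + 1) * j) := by
    simp [Finset.Nat.mem_antidiagonalTuple]
  have coeff_ne_zero : ∏ i : Fin (k + 1), t ^ ((i : ℕ) * j) ≠ 0 :=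
    Finset.prod_ne_zero_iff.2 fun i _ => pow_ne_zero _ ht
  have const_term : (∏ i : Fin (k + 1), t ^ ((i : ℕ) * j)) •
      ∏ _i : Fin (k + 1), (X j : MvPolynomial ℕ ℂ) =
        monomial (Finsupp.single j (k + 1)) (∏ i : Fin (k + 1), t ^ ((i : ℕ) * j)) := by
    simp [X_pow_eq_monomial, smul_monomial]
  refine ⟨Units.mk0 _ coeff_ne_zero, ?_⟩
  rw [wheelCoeff, ← Finset.add_sum_erase _ _ const_mem, const_term, Units.val_mk0,
    add_sub_cancel_left]
  refine sum_mem fun a ha => Submodule.smul_mem _ _ ?_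
  obtain ⟨hne, hsum⟩ := Finset.mem_erase.1 ha
  rw [prod_X_eq_monomial_exponent]
  exact (monomial_mem_restrictSupport ℂ).2
    (.inl (moreSpread_exponent (Finset.Nat.mem_antidiagonalTuple.1 hsum) hne))

end WheelCoeff

section Partitions

variable (k n : ℕ) (t : ℂ)

theorem Esub_eq_restrictSupport : Esub n = restrictSupport ℂ {m | m.degree = n} := by
  rw [Esub, restrictSupport_eq_span]
  congr 1
  ext p
  constructor
  · rintro ⟨l, -, rfl⟩
    exact ⟨exponent l, degree_exponent l, (prod_X_eq_monomial_exponent l).symm⟩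
  · rintro ⟨m, rfl, rfl⟩
    obtain ⟨l, hl, h⟩ := exists_antitone_exponent_eq m
    exact ⟨l, hl, by rw [eMon, prod_X_eq_monomial_exponent, h]⟩

/-- The index set of the basis: partitions with at most `n` parts, padded by zeros to length `n`,
in which every value, zero included, occurs at most `k` times. -/
abbrev AdmissiblePartition : Type :=
  {l : Fin n → ℕ // Antitone l ∧
    ∀ i : ℕ, (Finset.univ.filter fun a : Fin n => l a = i).card ≤ k}

theorem span_eMon_admissible_eq_restrictSupport :
    Submodule.span ℂ (Set.range fun l : AdmissiblePartition k n => eMon n l.1) =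
      restrictSupport ℂ {m | m.degree = n ∧ ∀ j, m j < k + 1} := by
  rw [restrictSupport_eq_span]
  congr 1
  ext p
  constructor
  · rintro ⟨l, rfl⟩
    refine ⟨exponent l.1, ⟨degree_exponent l.1, fun j => ?_⟩,
      (prod_X_eq_monomial_exponent l.1).symm⟩
    rw [exponent_apply]
    exact Nat.lt_succ_of_le (l.2.2 j)
  · rintro ⟨m, ⟨rfl, hm⟩, rfl⟩
    obtain ⟨l, hl, h⟩ := exists_antitone_exponent_eq m
    refine ⟨⟨l, hl, fun j => ?_⟩, ?_⟩
    · rw [← exponent_apply, h]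
      exact Nat.le_of_lt_succ (hm j)
    · simp only [eMon, prod_X_eq_monomial_exponent, h]

theorem linearIndependent_eMon_admissible :
    LinearIndependent ℂ fun l : AdmissiblePartition k n => eMon n l.1 := by
  have exponent_injective :
      Function.Injective fun l : AdmissiblePartition k n => exponent l.1 :=
    fun l l' h => Subtype.ext (exponent_injOn_antitone l.2.1 l'.2.1 h)
  have eMon_eq : (fun l : AdmissiblePartition k n => eMon n l.1) =
      basisMonomials ℕ ℂ ∘ fun l => exponent l.1 :=
    funext fun l => by
      simp only [eMon, prod_X_eq_monomial_exponent, coe_basisMonomials, Function.comp_apply]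
  rw [eMon_eq]
  exact (basisMonomials ℕ ℂ).linearIndependent.comp _ exponent_injective

variable {k t}

theorem JEsub_eq_mul (ht : IsPrimitiveRoot t (k + 1)) :
    JEsub k n t =
      Submodule.span ℂ (Set.range fun j => wheelCoeff k t ((k + 1) * j)) * Esub (n - k - 1) := by
  rw [Esub, Submodule.span_mul_span]
  apply le_antisymm
  · refine Submodule.span_le.2 ?_
    rintro _ ⟨m, l, hl, rfl⟩
    by_cases hm : (k + 1) ∣ m
    · obtain ⟨j, rfl⟩ := hm
      exact Submodule.subset_span ⟨_, ⟨j, rfl⟩, _, ⟨l, hl, rfl⟩, rfl⟩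
    · rw [wheelCoeff_eq_zero ht hm, zero_mul]
      exact zero_mem _
  · refine Submodule.span_mono ?_
    rintro _ ⟨_, ⟨j, rfl⟩, _, ⟨l, hl, rfl⟩, rfl⟩
    exact ⟨(k + 1) * j, l, hl, rfl⟩

theorem disjoint_span_eMon_admissible_JEsub (ht : IsPrimitiveRoot t (k + 1)) :
    Disjoint (Submodule.span ℂ (Set.range fun l : AdmissiblePartition k n => eMon n l.1))
      (JEsub k n t) := by
  have JEsub_le : JEsub k n t ≤
      (Ideal.span (Set.range fun j => wheelCoeff k t ((k + 1) * j))).restrictScalars ℂ := by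
    rw [JEsub_eq_mul n ht, Submodule.mul_le]
    exact fun c hc p _ => Ideal.mul_mem_right p _ (Submodule.span_subset_span ℂ _ _ hc)
  rw [span_eMon_admissible_eq_restrictSupport]
  exact (disjoint_restrictSupport_ideal_span_range k.succ_pos
    (hasLeadingMonomial_wheelCoeff (ht.ne_zero k.succ_ne_zero))).mono
      (restrictSupport_mono ℂ fun _ hm => hm.2) JEsub_le

theorem Esub_le_JEsub_sup_span_eMon_admissible (ht : IsPrimitiveRoot t (k + 1)) :
    Esub n ≤ JEsub k n t ⊔
      Submodule.span ℂ (Set.range fun l : AdmissiblePartition k n => eMon n l.1) := by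
  rw [JEsub_eq_mul n ht, span_eMon_admissible_eq_restrictSupport, Esub_eq_restrictSupport,
    Esub_eq_restrictSupport, Nat.sub_sub]
  exact restrictSupport_degree_le_sup k.succ_pos
    (hasLeadingMonomial_wheelCoeff (ht.ne_zero k.succ_ne_zero)) (fun _ _ h => h.1) n

end Partitions

/-- in the quotient `E_n^{(k,2)} = E_n/(J·E_{n-k-1})`, the images of the
monomials `e_λ` with `λ ∈ π_n` admissible (every value occurring at most `k` times)
form a basis of the quotient: they are linearly independent and span. -/
theorem admissible_eMon_basis_quotient
    (k n : ℕ) (hk : 0 < k) (t : ℂ) (ht : IsPrimitiveRoot t (k + 1)) (hn : k + 1 ≤ n) :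
    LinearIndependent ℂ
      (fun l : {l : Fin n → ℕ // Antitone l ∧
          ∀ i : ℕ, (Finset.univ.filter fun a : Fin n => l a = i).card ≤ k} =>
        (Submodule.Quotient.mk
          (⟨eMon n l.1, Submodule.subset_span ⟨l.1, l.2.1, rfl⟩⟩ : Esub n) :
          ↥(Esub n) ⧸ (JEsub k n t).comap (Esub n).subtype)) ∧
    Submodule.span ℂ
      (Set.range fun l : {l : Fin n → ℕ // Antitone l ∧
          ∀ i : ℕ, (Finset.univ.filter fun a : Fin n => l a = i).card ≤ k} =>
        (Submodule.Quotient.mk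
          (⟨eMon n l.1, Submodule.subset_span ⟨l.1, l.2.1, rfl⟩⟩ : Esub n) :
          ↥(Esub n) ⧸ (JEsub k n t).comap (Esub n).subtype)) = ⊤ := by
  constructor
  · exact linearIndependent_mk_comap_subtype (linearIndependent_eMon_admissible k n)
      (disjoint_span_eMon_admissible_JEsub n ht)
  · exact span_range_mk_comap_subtype_eq_top (Esub_le_JEsub_sup_span_eMon_admissible n ht)
end

section
/- For k = 1 and r = 2 (so t = −1), the space F_n^{(1,2)} consists exactly of the polynomials of the form ∏_{1 ≤ i < j ≤ n} (x_i + x_j) · g(x_1,…,x_n), where g ranges over all symmetric polynomials in ℂ[x_1,…,x_n]. -/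
open MvPolynomial

/-!
The factors `x_i + x_j` are regular modulo one another: substituting `x_i ↦ -x_j` kills exactly the
multiples of `x_i + x_j`, and turns every other factor into some `x_k ± x_l` with `k ≠ l`, which is
not a zero divisor. So a polynomial divisible by every `x_i + x_j` is divisible by their product.
A symmetric polynomial divisible by one `x_i + x_j` is divisible by all of them, since permutations
act transitively on ordered pairs of distinct variables, and the cofactor is symmetric because the
product is symmetric and regular. Over an infinite domain, divisibility by `x_i + x_j` is vanishing
on the hyperplane `x_i + x_j = 0`.
-/

section Divisibility

variable {ι M : Type*} [CommMonoid M] {s : Finset ι} {a : ι → M} {b m : M}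

lemma dvd_of_dvd_prod_mul
    (hcancel : ∀ i ∈ s, ∀ x, b ∣ a i * x → b ∣ x) (hb : b ∣ (∏ i ∈ s, a i) * m) : b ∣ m := by
  induction s using Finset.cons_induction with
  | empty => simpa using hb
  | cons i s hi ih =>
    rw [Finset.forall_mem_cons] at hcancel
    rw [Finset.prod_cons, mul_assoc] at hb
    exact ih hcancel.2 (hcancel.1 _ hb)

lemma prod_dvd_of_pairwise_dvd_of_dvd_mul
    (hcancel : (s : Set ι).Pairwise fun i j ↦ ∀ x, a i ∣ a j * x → a i ∣ x)
    (hdvd : ∀ i ∈ s, a i ∣ m) : ∏ i ∈ s, a i ∣ m := by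
  induction s using Finset.cons_induction with
  | empty => simp
  | cons i s hi ih =>
    rw [Finset.forall_mem_cons] at hdvd
    obtain ⟨c, rfl⟩ : ∏ j ∈ s, a j ∣ m := ih (hcancel.mono (by simp)) hdvd.2
    have hc : a i ∣ c := dvd_of_dvd_prod_mul
      (fun j hj ↦ hcancel (by simp) (by simp [hj]) (ne_of_mem_of_not_mem hj hi).symm) hdvd.1
    rw [Finset.prod_cons, mul_comm (a i)]
    exact mul_dvd_mul_left _ hc

end Divisibility

section SubstVar

variable {σ R : Type*} [DecidableEq σ] [CommSemiring R] {i : σ}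

/-- The substitution `x_i ↦ q`, leaving all the other variables unchanged. -/
noncomputable def substVar (i : σ) (q : MvPolynomial σ R) :
    MvPolynomial σ R →ₐ[R] MvPolynomial σ R :=
  aeval (Function.update X i q)

lemma substVar_X_self (i : σ) (q : MvPolynomial σ R) : substVar i q (X i) = q := by
  simp [substVar]

lemma substVar_X_of_ne {k : σ} (hk : k ≠ i) (q : MvPolynomial σ R) :
    substVar i q (X k) = X k := by
  simp [substVar, hk]

lemma substVar_eq_self_of_notMem_vars {p : MvPolynomial σ R} (hp : i ∉ p.vars)
    (q : MvPolynomial σ R) : substVar i q p = p :=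
  hom_congr_vars (f₁ := (substVar i q).toRingHom) (f₂ := RingHom.id _)
    (by ext; simp)
    (fun _ hk _ ↦ substVar_X_of_ne (ne_of_mem_of_not_mem hk hp) q) rfl

lemma eval_substVar (v : σ → R) (i : σ) (q p : MvPolynomial σ R) :
    eval v (substVar i q p) = eval (Function.update v i (eval v q)) p := by
  simp only [← coe_aeval_eq_eval, RingHom.coe_coe, substVar, comp_aeval_apply]
  congr 2
  ext k
  rcases eq_or_ne k i with rfl | hk <;> simp [*]

end SubstVar

section XSub

variable {σ R : Type*} [DecidableEq σ] [CommRing R] {i : σ} {q : MvPolynomial σ R}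

lemma X_sub_dvd_sub_substVar (i : σ) (q p : MvPolynomial σ R) :
    X i - q ∣ p - substVar i q p := by
  rw [← Ideal.mem_span_singleton, ← Ideal.Quotient.eq]
  change Ideal.Quotient.mkₐ R _ p = ((Ideal.Quotient.mkₐ R _).comp (substVar i q)) p
  congr 1
  ext k
  rcases eq_or_ne k i with rfl | hk
  · simp [substVar_X_self, Ideal.Quotient.eq]
  · simp [substVar_X_of_ne hk]

lemma X_sub_dvd_iff_substVar_eq_zero (hq : i ∉ q.vars) {p : MvPolynomial σ R} :
    X i - q ∣ p ↔ substVar i q p = 0 := by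
  constructor
  · rintro ⟨c, rfl⟩
    simp [substVar_X_self, substVar_eq_self_of_notMem_vars hq]
  · intro hp
    simpa [hp] using X_sub_dvd_sub_substVar i q p

lemma leftInverse_substVar_X_sub_substVar_X_add (hq : i ∉ q.vars) :
    Function.LeftInverse (substVar i (X i - q)) (substVar i (X i + q)) := by
  suffices (substVar i (X i - q)).comp (substVar i (X i + q)) = AlgHom.id R _ from
    DFunLike.congr_fun this
  ext1 k
  rcases eq_or_ne k i with rfl | hk
  · simp [substVar_X_self, substVar_eq_self_of_notMem_vars hq]
  · simp [substVar_X_of_ne hk]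

end XSub

lemma isRegular_of_isRegular_map {A B F : Type*} [CommMagma A] [Mul B]
    [FunLike F A B] [MulHomClass F A B] {φ : F} (hφ : Function.Injective φ) {a : A}
    (ha : IsRegular (φ a)) : IsRegular a := by
  refine isLeftRegular_iff_isRegular.1 fun x y (hxy : a * x = a * y) ↦ hφ (ha.left ?_)
  simpa only [map_mul] using congrArg φ hxy

lemma isRegular_X_sub {σ R : Type*} [CommRing R] {i : σ} {q : MvPolynomial σ R}
    (hq : i ∉ q.vars) : IsRegular (X i - q) := by
  classical
  refine isRegular_of_isRegular_map (leftInverse_substVar_X_sub_substVar_X_add hq).injective ?_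
  have hmap : substVar i (X i + q) (X i - q) = X i := by
    rw [map_sub, substVar_X_self, substVar_eq_self_of_notMem_vars hq, add_sub_cancel_right]
  rw [hmap]
  exact isRegular_X

lemma notMem_vars_X {σ R : Type*} [CommSemiring R] {i j : σ} (hij : i ≠ j) :
    i ∉ (X j : MvPolynomial σ R).vars := by
  cases subsingleton_or_nontrivial R
  · simp [Subsingleton.elim (X j : MvPolynomial σ R) 0]
  · simpa using hij

section Symmetric

variable {σ R : Type*} [CommSemiring R]

lemma X_add_X_dvd_of_isSymmetric {f : MvPolynomial σ R} (hf : f.IsSymmetric)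
    {i j k l : σ} (hij : i ≠ j) (hdvd : X i + X j ∣ f) (hkl : k ≠ l) : X k + X l ∣ f := by
  obtain ⟨e, rfl, rfl⟩ := MulAction.is_two_pretransitive_iff.1
    (Equiv.Perm.isMultiplyPretransitive σ 2) hij hkl
  simpa [hf e] using map_dvd (rename e) hdvd

lemma isSymmetric_of_isSymmetric_mul {f g : MvPolynomial σ R} (hreg : IsRegular f)
    (hf : f.IsSymmetric) (hfg : (f * g).IsSymmetric) : g.IsSymmetric := by
  intro e
  refine hreg.left ?_
  simpa [hf e] using hfg e

end Symmetric

section SumOfTwoVariables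

variable {σ R : Type*} [CommRing R] {i j k l : σ}

lemma isRegular_X_sub_X (hij : i ≠ j) : IsRegular (X i - X j : MvPolynomial σ R) :=
  isRegular_X_sub (notMem_vars_X hij)

lemma isRegular_X_add_X (hij : i ≠ j) : IsRegular (X i + X j : MvPolynomial σ R) := by
  simpa using isRegular_X_sub (q := -X j) (by simpa using notMem_vars_X hij)

lemma X_add_X_dvd_iff_substVar_eq_zero [DecidableEq σ] (hij : i ≠ j) {p : MvPolynomial σ R} :
    X i + X j ∣ p ↔ substVar i (-X j) p = 0 := by
  simpa using X_sub_dvd_iff_substVar_eq_zero (q := -X j) (p := p) (by simpa using notMem_vars_X hij)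

lemma isRegular_substVar_neg_X_add_X [DecidableEq σ] (hkl : k ≠ l) (hne : s(i, j) ≠ s(k, l)) :
    IsRegular (substVar i (-X j) (X k + X l) : MvPolynomial σ R) := by
  rw [map_add]
  rcases eq_or_ne k i with rfl | hki
  · have hlj : l ≠ j := by rintro rfl; exact hne rfl
    rw [substVar_X_self, substVar_X_of_ne hkl.symm, neg_add_eq_sub]
    exact isRegular_X_sub_X hlj
  rcases eq_or_ne l i with rfl | hli
  · have hkj : k ≠ j := by rintro rfl; exact hne Sym2.eq_swap
    rw [substVar_X_self, substVar_X_of_ne hkl, ← sub_eq_add_neg]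
    exact isRegular_X_sub_X hkj
  · rw [substVar_X_of_ne hki, substVar_X_of_ne hli]
    exact isRegular_X_add_X hkl

lemma X_add_X_dvd_of_dvd_X_add_X_mul (hij : i ≠ j) (hkl : k ≠ l) (hne : s(i, j) ≠ s(k, l))
    {p : MvPolynomial σ R} (hp : X i + X j ∣ (X k + X l) * p) : X i + X j ∣ p := by
  classical
  rw [X_add_X_dvd_iff_substVar_eq_zero hij] at hp ⊢
  rw [map_mul] at hp
  exact (isRegular_substVar_neg_X_add_X hkl hne).left.mul_left_eq_zero_iff.1 hp

lemma X_add_X_dvd_iff_forall_eval_eq_zero [IsDomain R] [Infinite R] (hij : i ≠ j)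
    {p : MvPolynomial σ R} :
    X i + X j ∣ p ↔ ∀ v : σ → R, v i + v j = 0 → eval v p = 0 := by
  classical
  constructor
  · rintro ⟨c, rfl⟩ v hv
    simp [hv]
  · intro hp
    rw [X_add_X_dvd_iff_substVar_eq_zero hij]
    refine MvPolynomial.funext fun v ↦ ?_
    rw [eval_substVar, map_zero]
    exact hp _ (by simp [hij.symm])

end SumOfTwoVariables

section PairSumProd

variable {σ R : Type*} [CommSemiring R]

/-- The linear form `x_i + x_j` attached to the unordered pair `{i, j}`. -/
noncomputable def pairSum (R : Type*) [CommSemiring R] (z : Sym2 σ) : MvPolynomial σ R :=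
  (z.map X).add

lemma rename_pairSum {τ : Type*} (e : σ → τ) (z : Sym2 σ) :
    rename e (pairSum R z) = pairSum R (z.map e) := by
  induction z with | _ i j => simp [pairSum]

variable [Fintype σ] [DecidableEq σ]

variable (σ R) in
/-- The product `∏_{i < j} (x_i + x_j)`. It is indexed by the unordered pairs of distinct variables,
which requires no order on the variables and makes its symmetry a reindexing. -/
noncomputable def pairSumProd : MvPolynomial σ R :=
  ∏ z : Sym2 σ with ¬z.IsDiag, pairSum R z

lemma isSymmetric_pairSumProd : (pairSumProd σ R).IsSymmetric := by
  intro e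
  simp only [pairSumProd, map_prod, rename_pairSum]
  refine Finset.prod_nbij' (Sym2.map e) (Sym2.map e.symm) ?_ ?_ ?_ ?_ fun _ _ ↦ rfl
  · simp [Sym2.isDiag_map e.injective]
  · simp [Sym2.isDiag_map e.symm.injective]
  · simp [Sym2.map_map]
  · simp [Sym2.map_map]

end PairSumProd

lemma pairSumProd_eq_prod_lt {σ R : Type*} [CommSemiring R] [Fintype σ] [LinearOrder σ] :
    pairSumProd σ R = ∏ p : σ × σ with p.1 < p.2, (X p.1 + X p.2) := by
  have hprod := Finset.sum_sym2_filter_not_isDiag (M := Additive (MvPolynomial σ R)) Finset.univ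
    fun z ↦ Additive.ofMul (pairSum R z)
  rw [← ofMul_prod, ← ofMul_prod, Additive.ofMul.apply_eq_iff_eq, Finset.sym2_univ] at hprod
  rw [pairSumProd, hprod]
  refine Finset.prod_congr ?_ fun _ _ ↦ rfl
  ext p
  simpa using ne_of_lt

section PairSumProdDvd

variable {σ R : Type*} [CommRing R]

lemma isRegular_pairSum {z : Sym2 σ} (hz : ¬z.IsDiag) : IsRegular (pairSum R z) := by
  induction z with | _ i j => exact isRegular_X_add_X hz

lemma pairSum_dvd_of_dvd_pairSum_mul {z w : Sym2 σ} (hz : ¬z.IsDiag) (hw : ¬w.IsDiag)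
    (hne : z ≠ w) {p : MvPolynomial σ R} (hp : pairSum R z ∣ pairSum R w * p) :
    pairSum R z ∣ p := by
  induction z with | _ i j =>
  induction w with | _ k l =>
  exact X_add_X_dvd_of_dvd_X_add_X_mul hz hw hne hp

variable [Fintype σ] [DecidableEq σ]

lemma isRegular_pairSumProd : IsRegular (pairSumProd σ R) :=
  IsRegular.prod fun _ hz ↦ isRegular_pairSum (Finset.mem_filter.1 hz).2

lemma pairSumProd_dvd_iff {f : MvPolynomial σ R} :
    pairSumProd σ R ∣ f ↔ ∀ i j, i ≠ j → X i + X j ∣ f := by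
  constructor
  · intro hf i j hij
    exact (Finset.dvd_prod_of_mem (pairSum R) (a := s(i, j)) (by simpa using hij)).trans hf
  · intro hf
    refine prod_dvd_of_pairwise_dvd_of_dvd_mul ?_ fun z hz ↦ ?_
    · intro z hz w hw hne p
      simp only [Finset.coe_filter_univ, Set.mem_ofPred_eq] at hz hw
      exact pairSum_dvd_of_dvd_pairSum_mul hz hw hne
    · induction z with | _ i j => exact hf i j (Finset.mem_filter.1 hz).2

lemma isSymmetric_and_X_add_X_dvd_iff {i j : σ} (hij : i ≠ j) {f : MvPolynomial σ R} :
    f.IsSymmetric ∧ X i + X j ∣ f ↔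
      ∃ g : MvPolynomial σ R, g.IsSymmetric ∧ f = pairSumProd σ R * g := by
  constructor
  · rintro ⟨hf, hdvd⟩
    obtain ⟨g, rfl⟩ : pairSumProd σ R ∣ f :=
      pairSumProd_dvd_iff.2 fun _ _ ↦ X_add_X_dvd_of_isSymmetric hf hij hdvd
    exact ⟨g, isSymmetric_of_isSymmetric_mul isRegular_pairSumProd isSymmetric_pairSumProd hf, rfl⟩
  · rintro ⟨g, hg, rfl⟩
    exact ⟨isSymmetric_pairSumProd.mul hg, pairSumProd_dvd_iff.1 (dvd_mul_right _ _) i j hij⟩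

end PairSumProdDvd

lemma forall_eval_ite_eq_zero_iff {R : Type*} [CommRing R] {n : ℕ} (hn : 2 ≤ n)
    {f : MvPolynomial (Fin n) R} :
    (∀ (x : R) (y : Fin n → R),
      eval (fun j : Fin n ↦ if (j : ℕ) = 0 then x else if (j : ℕ) = 1 then -x else y j) f = 0) ↔
      ∀ v : Fin n → R, v ⟨0, by lia⟩ + v ⟨1, by lia⟩ = 0 → eval v f = 0 := by
  constructor
  · intro h v hv
    rw [← h (v ⟨0, by lia⟩) v]
    congr 2
    funext j
    split_ifs with h0 h1
    · exact congrArg v (Fin.ext h0)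
    · rw [← eq_neg_of_add_eq_zero_right hv]
      exact congrArg v (Fin.ext h1)
    · rfl
  · exact fun h x y ↦ h _ (by simp)

theorem F12_eq_vandermonde_like_times_symmetric_general {R : Type*} [CommRing R] [IsDomain R]
    [Infinite R] (n : ℕ) (hn : 2 ≤ n) (f : MvPolynomial (Fin n) R) :
    (f.IsSymmetric ∧ ∀ (x : R) (y : Fin n → R),
      eval (fun j : Fin n ↦ if (j : ℕ) = 0 then x else if (j : ℕ) = 1 then -x else y j) f = 0)
    ↔ ∃ g : MvPolynomial (Fin n) R, g.IsSymmetric ∧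
        f = (∏ p : Fin n × Fin n with p.1 < p.2, (X p.1 + X p.2)) * g := by
  have h01 : (⟨0, by lia⟩ : Fin n) ≠ ⟨1, by lia⟩ := by simp
  rw [forall_eval_ite_eq_zero_iff hn, ← X_add_X_dvd_iff_forall_eval_eq_zero h01,
    isSymmetric_and_X_add_X_dvd_iff h01, pairSumProd_eq_prod_lt]

/-- For `k = 1`, `r = 2` (so `t = -1`), the space `F_n^{(1,2)}` consists exactly
of the polynomials `∏_{1 ≤ i < j ≤ n} (x_i + x_j) · g` with `g` symmetric. -/
theorem F12_eq_vandermonde_like_times_symmetric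
    (n : ℕ) (hn : 2 ≤ n) (f : MvPolynomial (Fin n) ℂ) :
    (f.IsSymmetric ∧ ∀ (x : ℂ) (y : Fin n → ℂ),
      MvPolynomial.eval
        (fun j : Fin n => if (j : ℕ) = 0 then x
          else if (j : ℕ) = 1 then -x else y j) f = 0)
    ↔ ∃ g : MvPolynomial (Fin n) ℂ, g.IsSymmetric ∧
        f = (∏ p ∈ Finset.univ.filter (fun p : Fin n × Fin n => p.1 < p.2),
              (MvPolynomial.X p.1 + MvPolynomial.X p.2)) * g :=
  F12_eq_vandermonde_like_times_symmetric_general n hn f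
end
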